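/- Let V ⊂ (ℂ*)² be an algebraic curve homeomorphic to a sphere with 3 punctures. Then there exists a multiplicative group endomorphism M : (ℂ*)² → (ℂ*)² and a line ℂΛ = {(z₁,z₂) ∈ (ℂ*)² : b₁z₁ + b₂z₂ + b₀ = 0} with b₀, b₁, b₂ ∈ ℂ* such that V = M(ℂΛ). -/

import Mathlib

/-!
Parametrise `V` by `t ∈ ℂ ∖ {0, 1}`. Continuous nowhere vanishing functions there have the form
`t ^ m * (t - 1) ^ n * exp f`, so the coordinates of `V` are `x = t ^ m * (t - 1) ^ n * exp f` and
`y = t ^ r * (t - 1) ^ s * exp g`.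

After a monomial change of coordinates `V` has a coordinate `u` with finite fibres and constant
local index `±1` off a finite set, so the windings of `u` at the three ends of `ℂ ∖ {0, 1}` count
the points of a generic fibre. In particular `u` cannot be `exp a`, hence `m s - n r ≠ 0` and
`(x, y)` lifts through the monomial map with exponents `m, n, r, s` to `(u, v)` with
`u = t * exp a` and `v = (t - 1) * exp a'`.

Generic fibres of this `u` are single points, so `v` is a holomorphic function of `u` off a finite
set, of polynomial growth, and therefore rational: `L(u) v = H(u)` with `L`, `H` coprime. The zeros
of `L` and `H` are values omitted by `u`. Since winding numbers of functions on `ℂ ∖ {0, 1}` live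
in `ℤ²`, at most two values are omitted, `0` and some `b`. Thus `v = κ * u ^ e * (u - b) ^ k`, and
`x`, `y` are monomials in `u` and `μ (u - b)`, two coordinates related by a line equation.
-/

open Set Filter Topology Metric
open Polynomial (C X derivative)
open scoped Polynomial Polynomial.Bivariate

/-! ### Winding numbers -/

/-- `F` winds `n` times around the origin along the circle of centre `p` and radius `r`. The winding
number is encoded by a continuous logarithm of `(t - p) ^ (-n) * F t` on the circle. -/
def HasWinding (F : ℂ → ℂ) (p : ℂ) (r : ℝ) (n : ℤ) : Prop :=
  ∃ g : ℂ → ℂ, ContinuousOn g (sphere p r) ∧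
    ∀ t ∈ sphere p r, F t = (t - p) ^ n * Complex.exp (g t)

theorem sub_eq_sub_of_exp_eq {α : Type*} [TopologicalSpace α] {s : Set α}
    (hs : IsPreconnected s) {f g : α → ℂ} (hf : ContinuousOn f s) (hg : ContinuousOn g s)
    (h : ∀ x ∈ s, Complex.exp (f x) = Complex.exp (g x)) {x y : α} (hx : x ∈ s) (hy : y ∈ s) :
    f x - g x = f y - g y := by
  have hdiscrete := isDiscrete_iff_discreteTopology.2
    (NormedSpace.discreteTopology_zmultiples (2 * Real.pi * Complex.I))
  refine hs.constant_of_mapsTo hdiscrete (hf.sub hg) (fun z hz => ?_) hx hy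
  obtain ⟨k, hk⟩ := Complex.exp_eq_exp_iff_exists_int.1 (h z hz)
  exact AddSubgroup.mem_zmultiples_iff.2 ⟨k, by simp [hk]⟩

theorem sub_ne_zero_of_mem_sphere {p t : ℂ} {r : ℝ} (hr : 0 < r) (ht : t ∈ sphere p r) :
    t - p ≠ 0 :=
  sub_ne_zero.2 (ne_of_mem_sphere ht hr.ne')

namespace HasWinding

variable {F G : ℂ → ℂ} {p : ℂ} {r : ℝ} {m n : ℤ}

theorem congr (h : HasWinding F p r n) (hFG : ∀ t ∈ sphere p r, G t = F t) :
    HasWinding G p r n := by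
  obtain ⟨g, hg, h⟩ := h
  exact ⟨g, hg, fun t ht => (hFG t ht).trans (h t ht)⟩

theorem mul (hr : 0 < r) (hF : HasWinding F p r m) (hG : HasWinding G p r n) :
    HasWinding (fun t => F t * G t) p r (m + n) := by
  obtain ⟨f, hf, hF⟩ := hF
  obtain ⟨g, hg, hG⟩ := hG
  refine ⟨fun t => f t + g t, hf.add hg, fun t ht => ?_⟩
  beta_reduce
  rw [hF t ht, hG t ht, zpow_add₀ (sub_ne_zero_of_mem_sphere hr ht), Complex.exp_add]
  ring

theorem zpow (hF : HasWinding F p r m) (k : ℤ) : HasWinding (fun t => F t ^ k) p r (m * k) := by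
  obtain ⟨f, hf, hF⟩ := hF
  refine ⟨fun t => k * f t, continuousOn_const.mul hf, fun t ht => ?_⟩
  beta_reduce
  rw [hF t ht, mul_zpow, ← zpow_mul, Complex.exp_int_mul]

theorem exp {g : ℂ → ℂ} (hg : ContinuousOn g (sphere p r)) :
    HasWinding (fun t => Complex.exp (g t)) p r 0 :=
  ⟨g, hg, fun t _ => by simp⟩

theorem const {c : ℂ} (hc : c ≠ 0) (p : ℂ) (r : ℝ) : HasWinding (fun _ => c) p r 0 :=
  ⟨fun _ => Complex.log c, continuousOn_const, fun t _ => by simp [Complex.exp_log hc]⟩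

theorem sub_center (p : ℂ) (r : ℝ) : HasWinding (fun t => t - p) p r 1 :=
  ⟨fun _ => 0, continuousOn_const, fun t _ => by simp⟩

theorem of_norm_sub_lt (hG : HasWinding G p r n) (hFc : ContinuousOn F (sphere p r))
    (hGc : ContinuousOn G (sphere p r)) (h : ∀ t ∈ sphere p r, ‖F t - G t‖ < ‖G t‖) :
    HasWinding F p r n := by
  obtain ⟨g, hg, hG⟩ := hG
  have hG0 : ∀ t ∈ sphere p r, G t ≠ 0 := fun t ht =>
    norm_pos_iff.1 ((norm_nonneg _).trans_lt (h t ht))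
  have hslit : ∀ t ∈ sphere p r, F t / G t ∈ Complex.slitPlane := fun t ht => by
    rw [show F t / G t = 1 + (F t - G t) / G t by rw [sub_div, div_self (hG0 t ht)]; ring]
    refine Complex.mem_slitPlane_of_norm_lt_one ?_
    rw [norm_div, div_lt_one (norm_pos_iff.2 (hG0 t ht))]
    exact h t ht
  refine ⟨fun t => g t + Complex.log (F t / G t), hg.add ((hFc.div hGc hG0).clog hslit),
    fun t ht => ?_⟩
  rw [Complex.exp_add, Complex.exp_log (Complex.slitPlane_ne_zero (hslit t ht)), ← mul_assoc,
    ← hG t ht, mul_div_cancel₀ _ (hG0 t ht)]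

theorem sub_of_inside {q : ℂ} (h : ‖q - p‖ < r) : HasWinding (fun t => t - q) p r 1 := by
  refine (sub_center p r).of_norm_sub_lt (by fun_prop) (by fun_prop) fun t ht => ?_
  rwa [mem_sphere_iff_norm.1 ht, sub_sub_sub_cancel_left, norm_sub_rev]

theorem sub_of_outside {q : ℂ} (hr : 0 ≤ r) (h : r < ‖q - p‖) :
    HasWinding (fun t => t - q) p r 0 := by
  rw [norm_sub_rev] at h
  refine (const (norm_pos_iff.1 (hr.trans_lt h)) p r).of_norm_sub_lt
    (by fun_prop) (by fun_prop) fun t ht => ?_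
  rwa [sub_sub_sub_cancel_right, mem_sphere_iff_norm.1 ht]

end HasWinding

theorem eq_zero_of_zpow_eq_exp {g : ℂ → ℂ} {p : ℂ} {r : ℝ} (hr : 0 < r) {n : ℤ}
    (hg : ContinuousOn g (sphere p r))
    (h : ∀ t ∈ sphere p r, (t - p) ^ n = Complex.exp (g t)) : n = 0 := by
  have hmem : ∀ θ, circleMap p r θ ∈ sphere p r := circleMap_mem_sphere p hr.le
  have hexp : ∀ θ ∈ (univ : Set ℝ), Complex.exp (g (circleMap p r θ)) =
      Complex.exp (n * (Complex.log r + θ * Complex.I)) := fun θ _ => by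
    rw [← h _ (hmem θ), Complex.exp_int_mul, Complex.exp_add,
      Complex.exp_log (by exact_mod_cast hr.ne'), circleMap, add_sub_cancel_left]
  have hconst := sub_eq_sub_of_exp_eq isPreconnected_univ
    (hg.comp_continuous (continuous_circleMap p r) hmem).continuousOn (by fun_prop) hexp
    (mem_univ 0) (mem_univ (2 * Real.pi))
  have hperiod : circleMap p r (2 * Real.pi) = circleMap p r 0 := by simp [circleMap]
  simp only [Function.comp_apply, hperiod] at hconst
  have : (n : ℂ) * (2 * Real.pi * Complex.I) = 0 := by
    push_cast at hconst
    linear_combination hconst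
  simpa [Real.pi_ne_zero] using this

theorem HasWinding.unique {F : ℂ → ℂ} {p : ℂ} {r : ℝ} {m n : ℤ} (hr : 0 < r)
    (hm : HasWinding F p r m) (hn : HasWinding F p r n) : m = n := by
  obtain ⟨f, hf, hF⟩ := hm
  obtain ⟨g, hg, hG⟩ := hn
  refine sub_eq_zero.1 (eq_zero_of_zpow_eq_exp hr (hg.sub hf) fun t ht => ?_)
  have hFG : (t - p) ^ m * Complex.exp (f t) = (t - p) ^ n * Complex.exp (g t) :=
    (hF t ht).symm.trans (hG t ht)
  have hne : t - p ≠ 0 := sub_ne_zero_of_mem_sphere hr ht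
  rw [zpow_sub₀ hne, Pi.sub_apply, Complex.exp_sub,
    div_eq_div_iff (zpow_ne_zero n hne) (Complex.exp_ne_zero _), hFG, mul_comm]

theorem image_add_exp_re_lt_log {p : ℂ} {r : ℝ} (hr : 0 < r) :
    (fun ζ => p + Complex.exp ζ) '' {ζ | ζ.re < Real.log r} = ball p r \ {p} := by
  ext t
  constructor
  · rintro ⟨ζ, hζ, rfl⟩
    refine ⟨?_, by simp⟩
    rw [mem_ball, dist_eq_norm, add_sub_cancel_left, Complex.norm_exp]
    exact (Real.lt_log_iff_exp_lt hr).1 hζ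
  · rintro ⟨ht, htp⟩
    have htp : t - p ≠ 0 := sub_ne_zero.2 htp
    refine ⟨Complex.log (t - p), ?_, by simp [Complex.exp_log htp]⟩
    rw [mem_ofPred, Complex.log_re]
    exact Real.log_lt_log (norm_pos_iff.2 htp) (mem_ball_iff_norm.1 ht)

theorem exists_exp_eq_of_convex {U : Set ℂ} (hU : Convex ℝ U) (hUo : IsOpen U) {F : ℂ → ℂ}
    (hF : ContinuousOn F U) (h0 : ∀ t ∈ U, F t ≠ 0) :
    ∃ g : ℂ → ℂ, ContinuousOn g U ∧ ∀ t ∈ U, F t = Complex.exp (g t) := by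
  rcases U.eq_empty_or_nonempty with rfl | hne
  · exact ⟨fun _ => 0, continuousOn_const, by simp⟩
  have := hU.contractibleSpace hne
  have hsimply : IsSimplyConnected U := (inferInstance : SimplyConnectedSpace U)
  obtain ⟨g, hg, h⟩ := Complex.exists_continuousOn_eqOn_exp_comp hsimply hUo hF
    fun ⟨t, ht, h⟩ => h0 t ht h
  exact ⟨g, hg, fun t ht => (h ht).symm⟩

theorem continuousOn_image_of_isOpenMap {α β γ : Type*} [TopologicalSpace α] [TopologicalSpace β]
    [TopologicalSpace γ] {f : α → β} (hf : IsOpenMap f) {s : Set α} (hs : IsOpen s) {k : β → γ}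
    (hk : ContinuousOn (k ∘ f) s) : ContinuousOn k (f '' s) := by
  rintro _ ⟨x, hx, rfl⟩
  have hkx : Tendsto k (map f (𝓝 x)) (𝓝 (k (f x))) := hk.continuousAt (hs.mem_nhds hx)
  exact (hkx.mono_left (hf.nhds_le x)).mono_left nhdsWithin_le_nhds

theorem exists_add_two_pi_I_eq {H : Set ℂ} (hH : IsPreconnected H)
    (hshift : ∀ ζ ∈ H, ζ + 2 * Real.pi * Complex.I ∈ H) {G : ℂ → ℂ} (hG : ContinuousOn G H)
    (hexp : ∀ ζ ∈ H, Complex.exp (G (ζ + 2 * Real.pi * Complex.I)) = Complex.exp (G ζ)) :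
    ∃ n : ℤ, ∀ ζ ∈ H, G (ζ + 2 * Real.pi * Complex.I) = G ζ + n * (2 * Real.pi * Complex.I) := by
  rcases H.eq_empty_or_nonempty with rfl | ⟨ζ₀, hζ₀⟩
  · exact ⟨0, by simp⟩
  obtain ⟨n, hn⟩ := Complex.exp_eq_exp_iff_exists_int.1 (hexp ζ₀ hζ₀)
  refine ⟨n, fun ζ hζ => ?_⟩
  have := sub_eq_sub_of_exp_eq hH (hG.comp (by fun_prop) hshift) hG hexp hζ hζ₀
  simp only [Function.comp_apply] at this
  linear_combination this + hn

theorem eq_of_exp_eq_of_periodicOn {H : Set ℂ}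
    (hshift : ∀ ζ, ζ + 2 * Real.pi * Complex.I ∈ H ↔ ζ ∈ H) {K : ℂ → ℂ}
    (hK : ∀ ζ ∈ H, K (ζ + 2 * Real.pi * Complex.I) = K ζ) {ζ ω : ℂ} (hζ : ζ ∈ H) (hω : ω ∈ H)
    (h : Complex.exp ζ = Complex.exp ω) : K ζ = K ω := by
  classical
  have hper : Function.Periodic (H.indicator K) (2 * Real.pi * Complex.I) := fun ξ => by
    by_cases hξ : ξ ∈ H
    · rw [indicator_of_mem ((hshift ξ).2 hξ), indicator_of_mem hξ, hK ξ hξ]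
    · rw [indicator_of_notMem (mt (hshift ξ).1 hξ), indicator_of_notMem hξ]
  obtain ⟨j, rfl⟩ := Complex.exp_eq_exp_iff_exists_int.1 h
  rw [← indicator_of_mem hζ K, hper.int_mul j ω, indicator_of_mem hω]

theorem exists_zpow_mul_exp_of_punctured_ball {F : ℂ → ℂ} {p : ℂ} {r : ℝ} (hr : 0 < r)
    (hF : ContinuousOn F (ball p r \ {p})) (h0 : ∀ t ∈ ball p r \ {p}, F t ≠ 0) :
    ∃ (n : ℤ) (g : ℂ → ℂ), ContinuousOn g (ball p r \ {p}) ∧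
      ∀ t ∈ ball p r \ {p}, F t = (t - p) ^ n * Complex.exp (g t) := by
  let H : Set ℂ := {ζ | ζ.re < Real.log r}
  have hHo : IsOpen H := isOpen_lt Complex.continuous_re continuous_const
  have hH : Convex ℝ H := convex_halfSpace_re_lt _
  have hshift : ∀ ζ, ζ + 2 * Real.pi * Complex.I ∈ H ↔ ζ ∈ H := fun ζ => by simp [H]
  have himage : (fun ζ => p + Complex.exp ζ) '' H = ball p r \ {p} := image_add_exp_re_lt_log hr
  have hmaps : ∀ ζ ∈ H, p + Complex.exp ζ ∈ ball p r \ {p} := fun ζ hζ =>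
    himage ▸ mem_image_of_mem _ hζ
  obtain ⟨G, hG, hFG⟩ := exists_exp_eq_of_convex hH hHo (hF.comp (by fun_prop) hmaps)
    fun ζ hζ => h0 _ (hmaps ζ hζ)
  simp only [Function.comp_apply] at hFG
  obtain ⟨n, hn⟩ := exists_add_two_pi_I_eq hH.isPreconnected (fun ζ => (hshift ζ).2) hG
    fun ζ hζ => by rw [← hFG ζ hζ, ← hFG _ ((hshift ζ).2 hζ), Complex.exp_periodic ζ]
  let K : ℂ → ℂ := fun ζ => G ζ - n * ζ
  have hKlog : ∀ ζ ∈ H, K (Complex.log (p + Complex.exp ζ - p)) = K ζ := fun ζ hζ => by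
    have hexp : Complex.exp (Complex.log (p + Complex.exp ζ - p)) = Complex.exp ζ := by
      rw [add_sub_cancel_left, Complex.exp_log (Complex.exp_ne_zero _)]
    refine eq_of_exp_eq_of_periodicOn hshift (fun ξ hξ => ?_) ?_ hζ hexp
    · simp only [K, hn ξ hξ]; ring
    · have hre := congrArg norm hexp
      rw [Complex.norm_exp, Complex.norm_exp, Real.exp_eq_exp] at hre
      exact hre.trans_lt hζ
  rw [← himage]
  refine ⟨n, fun t => K (Complex.log (t - p)), ?_, ?_⟩
  · refine continuousOn_image_of_isOpenMap
      ((isOpenMap_add_left p).comp Complex.isOpenMap_exp) hHo ?_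
    exact (hG.sub (by fun_prop : ContinuousOn (fun ζ : ℂ => n * ζ) H)).congr hKlog
  · rintro _ ⟨ζ, hζ, rfl⟩
    simp only [hKlog ζ hζ, hFG ζ hζ]
    simp only [K, add_sub_cancel_left, Complex.exp_sub, Complex.exp_int_mul]
    rw [mul_div_cancel₀ _ (zpow_ne_zero _ (Complex.exp_ne_zero _))]

theorem exists_continuousOn_compl_eventuallyEq {E : Type*} [TopologicalSpace E] {g : ℂ → E} {p : ℂ}
    {r : ℝ} (hr : 0 < r) (hg : ContinuousOn g (ball p r \ {p})) :
    ∃ k : ℂ → E, ContinuousOn k {p}ᶜ ∧ k =ᶠ[𝓝[≠] p] g := by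
  let ρ : ℂ → ℂ := fun t => p + (min 1 (r / 2 / ‖t - p‖) : ℝ) • (t - p)
  have hne : ∀ t ∈ ({p} : Set ℂ)ᶜ, 0 < ‖t - p‖ := fun t ht => norm_pos_iff.2 (sub_ne_zero.2 ht)
  have hρ : ContinuousOn ρ {p}ᶜ := by
    have : ContinuousOn (fun t => r / 2 / ‖t - p‖) {p}ᶜ :=
      continuousOn_const.div (by fun_prop) fun t ht => (hne t ht).ne'
    fun_prop
  have hmaps : MapsTo ρ {p}ᶜ (ball p r \ {p}) := fun t ht => by
    have hpos : 0 < min 1 (r / 2 / ‖t - p‖) := lt_min one_pos (div_pos (half_pos hr) (hne t ht))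
    refine ⟨?_, by simpa [ρ, hpos.ne', sub_eq_zero] using ht⟩
    rw [mem_ball, dist_eq_norm, add_sub_cancel_left, norm_smul, Real.norm_of_nonneg hpos.le]
    calc _ ≤ r / 2 / ‖t - p‖ * ‖t - p‖ := by gcongr; exact min_le_right _ _
      _ = r / 2 := div_mul_cancel₀ _ (hne t ht).ne'
      _ < r := half_lt_self hr
  refine ⟨g ∘ ρ, hg.comp hρ hmaps, ?_⟩
  filter_upwards [self_mem_nhdsWithin, nhdsWithin_le_nhds (ball_mem_nhds p (half_pos hr))]
    with t ht htr
  have : 1 ≤ r / 2 / ‖t - p‖ := by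
    rw [one_le_div (hne t ht)]; exact (mem_ball_iff_norm.1 htr).le
  simp [ρ, this]

theorem exists_zpow_mul_exp_mul {W : Set ℂ} (hW : IsOpen W) {p : ℂ} (hp : p ∈ W) {F : ℂ → ℂ}
    (hF : ContinuousOn F (W \ {p})) (h0 : ∀ t ∈ W \ {p}, F t ≠ 0) :
    ∃ (n : ℤ) (k F' : ℂ → ℂ), ContinuousOn k {p}ᶜ ∧ ContinuousOn F' W ∧ (∀ t ∈ W, F' t ≠ 0) ∧
      ∀ t ∈ W \ {p}, F t = (t - p) ^ n * Complex.exp (k t) * F' t := by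
  classical
  obtain ⟨r, hr, hball⟩ := Metric.isOpen_iff.1 hW p hp
  have hsub : ball p r \ {p} ⊆ W \ {p} := sdiff_subset_sdiff_left hball
  obtain ⟨n, g, hg, hFg⟩ := exists_zpow_mul_exp_of_punctured_ball hr (hF.mono hsub)
    fun t ht => h0 t (hsub ht)
  obtain ⟨k, hk, hkg⟩ := exists_continuousOn_compl_eventuallyEq hr hg
  let E : ℂ → ℂ := fun t => (t - p) ^ n * Complex.exp (k t)
  have hE0 : ∀ t ≠ p, E t ≠ 0 := fun t ht =>
    mul_ne_zero (zpow_ne_zero _ (sub_ne_zero.2 ht)) (Complex.exp_ne_zero _)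
  have hE : ContinuousOn E (W \ {p}) :=
    (ContinuousOn.zpow₀ (f := fun t => t - p) (by fun_prop) n
      fun t ht => .inl (sub_ne_zero.2 ht.2)).mul (hk.mono fun t ht => ht.2).cexp
  have hone : (fun t => F t / E t) =ᶠ[𝓝[≠] p] fun _ => 1 := by
    filter_upwards [hkg, self_mem_nhdsWithin, nhdsWithin_le_nhds (ball_mem_nhds p hr)]
      with t ht htp htr
    rw [hFg t ⟨htr, htp⟩, ← ht]
    exact div_self (hE0 t htp)
  refine ⟨n, k, Function.update (fun t => F t / E t) p 1, hk, ?_, fun t ht => ?_, fun t ht => ?_⟩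
  · refine continuousOn_update_iff.2 ⟨hF.div hE fun t ht => hE0 t ht.2, fun _ => ?_⟩
    exact (tendsto_const_nhds.congr' hone.symm).mono_left (nhdsWithin_mono p fun t ht => ht.2)
  · rcases eq_or_ne t p with rfl | htp
    · simp
    · rw [Function.update_of_ne htp]
      exact div_ne_zero (h0 t ⟨ht, htp⟩) (hE0 t htp)
  · rw [Function.update_of_ne ht.2, mul_div_cancel₀ _ (hE0 t ht.2)]

theorem exists_prod_zpow_mul_exp {U : Set ℂ} (hU : Convex ℝ U) (hUo : IsOpen U) (P : Finset ℂ)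
    (hPU : ↑P ⊆ U) {F : ℂ → ℂ} (hF : ContinuousOn F (U \ P)) (h0 : ∀ t ∈ U \ P, F t ≠ 0) :
    ∃ (n : ℂ → ℤ) (g : ℂ → ℂ), ContinuousOn g (U \ P) ∧
      ∀ t ∈ U \ P, F t = (∏ p ∈ P, (t - p) ^ n p) * Complex.exp (g t) := by
  classical
  induction P using Finset.induction_on generalizing F with
  | empty =>
    obtain ⟨g, hg, h⟩ := exists_exp_eq_of_convex hU hUo (F := F) (by simpa using hF)
      (by simpa using h0)
    exact ⟨fun _ => 0, g, by simpa using hg, by simpa using h⟩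
  | insert p P hp ih =>
    rw [Finset.coe_insert, insert_subset_iff] at hPU
    have hsdiff : U \ ↑(insert p P) = (U \ (P : Set ℂ)) \ {p} := by
      rw [Finset.coe_insert, sdiff_sdiff, union_singleton]
    rw [hsdiff] at hF h0 ⊢
    obtain ⟨m, k, F', hk, hF', hF'0, hFF'⟩ :=
      exists_zpow_mul_exp_mul (hUo.sdiff P.finite_toSet.isClosed) ⟨hPU.1, hp⟩ hF h0
    obtain ⟨n, g, hg, hF'g⟩ := ih hPU.2 hF' hF'0
    refine ⟨Function.update n p m, fun t => k t + g t,
      (hk.mono fun t ht => ht.2).add (hg.mono fun t ht => ht.1), fun t ht => ?_⟩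
    have hprod : ∏ q ∈ P, (t - q) ^ Function.update n p m q = ∏ q ∈ P, (t - q) ^ n q :=
      Finset.prod_congr rfl fun q hq => by
        rw [Function.update_of_ne (ne_of_mem_of_not_mem hq hp)]
    rw [Finset.prod_insert hp, Function.update_self, hprod, hFF' t ht, hF'g t ht.1, Complex.exp_add]
    ring

namespace HasWinding

variable {F g : ℂ → ℂ} {p : ℂ} {r : ℝ}

theorem prod_zpow (hr : 0 < r) (P : Finset ℂ) (n : ℂ → ℤ) (hP : ∀ q ∈ P, ‖q - p‖ ≠ r) :
    HasWinding (fun t => ∏ q ∈ P, (t - q) ^ n q) p r (∑ q ∈ P with ‖q - p‖ < r, n q) := by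
  classical
  rw [Finset.sum_filter]
  induction P using Finset.induction_on with
  | empty => simpa using const one_ne_zero p r
  | insert q P hq ih =>
    simp only [Finset.mem_insert, forall_eq_or_imp] at hP
    have hfactor : HasWinding (fun t => (t - q) ^ n q) p r (if ‖q - p‖ < r then n q else 0) := by
      split_ifs with h
      · simpa using (sub_of_inside h).zpow (n q)
      · simpa using (sub_of_outside hr.le (lt_of_le_of_ne (not_lt.1 h) hP.1.symm)).zpow (n q)
    simpa [Finset.sum_insert hq, Finset.prod_insert hq] using hfactor.mul hr (ih hP.2)

theorem of_prod_zpow_mul_exp (hr : 0 < r) (P : Finset ℂ) (n : ℂ → ℤ)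
    (hP : ∀ q ∈ P, ‖q - p‖ ≠ r) (hg : ContinuousOn g (sphere p r))
    (hF : ∀ t ∈ sphere p r, F t = (∏ q ∈ P, (t - q) ^ n q) * Complex.exp (g t)) :
    HasWinding F p r (∑ q ∈ P with ‖q - p‖ < r, n q) := by
  simpa using ((prod_zpow hr P n hP).mul hr (exp hg)).congr hF

end HasWinding

theorem eventually_lt_norm_sub (P : Finset ℂ) (p : ℂ) :
    ∀ᶠ r in 𝓝 (0 : ℝ), ∀ q ∈ P, q ≠ p → r < ‖q - p‖ := by
  rw [Filter.eventually_all_finset]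
  intro q _
  rw [eventually_imp_distrib_left]
  exact fun h => Iio_mem_nhds (norm_pos_iff.2 (sub_ne_zero.2 h))

theorem HasWinding.eventually_of_prod_zpow_mul_exp {F g : ℂ → ℂ} (P : Finset ℂ) (n : ℂ → ℤ)
    {U : Set ℂ} {p : ℂ} (hp : U ∈ 𝓝 p) (hpP : p ∈ P) (hg : ContinuousOn g (U \ P))
    (hF : ∀ t ∈ U \ P, F t = (∏ q ∈ P, (t - q) ^ n q) * Complex.exp (g t)) :
    ∀ᶠ r in 𝓝[>] (0 : ℝ), HasWinding F p r (n p) := by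
  obtain ⟨ε, hε, hball⟩ := Metric.mem_nhds_iff.1 hp
  filter_upwards [nhdsWithin_le_nhds (eventually_lt_norm_sub P p), self_mem_nhdsWithin,
    nhdsWithin_le_nhds (Iio_mem_nhds hε)] with r hr hr0 hrε
  have hsphere : sphere p r ⊆ U \ P := fun t ht => by
    refine ⟨hball (sphere_subset_ball hrε ht), fun htP => ?_⟩
    exact (hr t htP (ne_of_mem_sphere ht hr0.ne')).ne' (mem_sphere_iff_norm.1 ht)
  have hinside : {q ∈ P | ‖q - p‖ < r} = {p} := by
    ext q
    rw [Finset.mem_filter, Finset.mem_singleton]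
    refine ⟨fun ⟨hq, hqr⟩ => by_contra fun hne => (hr q hq hne).not_gt hqr, ?_⟩
    rintro rfl
    exact ⟨hpP, by simpa using hr0⟩
  have hnorm : ∀ q ∈ P, ‖q - p‖ ≠ r := fun q hq => by
    rcases eq_or_ne q p with rfl | hqp
    · simpa using hr0.ne
    · exact (hr q hq hqp).ne'
  simpa only [hinside, Finset.sum_singleton] using
    of_prod_zpow_mul_exp hr0 P n hnorm (hg.mono hsphere) fun t ht => hF t (hsphere ht)

/-! ### Laurent polynomials and bivariate polynomials -/

/-- The value at `(x, y)` of the Laurent polynomial in two variables with coefficients `c`. -/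
def laurentEval {K : Type*} [Field K] (c : (ℤ × ℤ) →₀ K) (x y : K) : K :=
  ∑ j ∈ c.support, c j * x ^ j.1 * y ^ j.2

theorem laurentEval_eq_sum {K : Type*} [Field K] (c : (ℤ × ℤ) →₀ K) (x y : K) :
    laurentEval c x y = c.sum fun j a => a * x ^ j.1 * y ^ j.2 :=
  rfl

theorem exists_laurentEval_comp_eq {K : Type*} [Field K] {c : (ℤ × ℤ) →₀ K} (hc : c ≠ 0)
    {m n r s : ℤ} (hdet : m * s - n * r ≠ 0) :
    ∃ c' : (ℤ × ℤ) →₀ K, c' ≠ 0 ∧ ∀ x y : K, x ≠ 0 → y ≠ 0 →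
      laurentEval c' x y = laurentEval c (x ^ m * y ^ n) (x ^ r * y ^ s) := by
  let e : ℤ × ℤ → ℤ × ℤ := fun j => (m * j.1 + r * j.2, n * j.1 + s * j.2)
  have he : Function.Injective e := fun i j h => by
    obtain ⟨h₁, h₂⟩ := Prod.ext_iff.1 h
    simp only [e] at h₁ h₂
    exact Prod.ext (mul_left_cancel₀ hdet (by linear_combination s * h₁ - r * h₂))
      (mul_left_cancel₀ hdet (by linear_combination -n * h₁ + m * h₂))
  refine ⟨c.embDomain ⟨e, he⟩, (Finsupp.embDomain_eq_zero).not.2 hc, fun x y hx hy => ?_⟩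
  rw [laurentEval_eq_sum, laurentEval_eq_sum, Finsupp.sum_embDomain]
  refine Finsupp.sum_congr fun j _ => ?_
  simp only [Function.Embedding.coeFn_mk, e, mul_zpow, zpow_add₀ hx, zpow_add₀ hy, zpow_mul]
  ring

theorem exists_evalEval_eq_zpow_mul_laurentEval {K : Type*} [Field K] {c : (ℤ × ℤ) →₀ K}
    (hc : c ≠ 0) :
    ∃ (Q : K[X][Y]) (a b : ℤ), Q.coeff 0 ≠ 0 ∧ ∀ x y : K, x ≠ 0 → y ≠ 0 →
      Q.evalEval x y = x ^ a * y ^ b * laurentEval c x y := by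
  have hne : c.support.Nonempty := Finsupp.support_nonempty_iff.2 hc
  obtain ⟨i, _, hmin₁⟩ := c.support.exists_min_image Prod.fst hne
  obtain ⟨k, hk, hmin₂⟩ := c.support.exists_min_image Prod.snd hne
  let Q : K[X][Y] := ∑ j ∈ c.support, Polynomial.monomial (j.2 - k.2).toNat
    (Polynomial.monomial (j.1 - i.1).toNat (c j))
  refine ⟨Q, -i.1, -k.2, fun h => ?_, fun x y hx hy => ?_⟩
  · have hcoeff : (Q.coeff 0).coeff (k.1 - i.1).toNat = c k := by
      simp only [Q, Polynomial.finsetSum_coeff, Polynomial.coeff_monomial]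
      rw [Finset.sum_eq_single_of_mem k hk, if_pos (by simp), Polynomial.coeff_monomial, if_pos rfl]
      intro j hj hjk
      have := hmin₁ j hj
      have := hmin₁ k hk
      have := hmin₂ j hj
      split_ifs with h₂
      · rw [Polynomial.coeff_monomial, if_neg]
        exact fun h₁ => hjk (Prod.ext (by lia) (by lia))
      · simp
    rw [h, Polynomial.coeff_zero] at hcoeff
    exact Finsupp.mem_support_iff.1 hk hcoeff.symm
  · simp only [Q, laurentEval, Polynomial.evalEval, Polynomial.eval_finsetSum,
      Polynomial.eval_monomial, Polynomial.eval_mul, Polynomial.eval_pow, Polynomial.eval_C,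
      Finset.mul_sum]
    refine Finset.sum_congr rfl fun j hj => ?_
    rw [← zpow_natCast, ← zpow_natCast, Int.toNat_of_nonneg (sub_nonneg.2 (hmin₁ j hj)),
      Int.toNat_of_nonneg (sub_nonneg.2 (hmin₂ j hj)), sub_eq_neg_add, sub_eq_neg_add,
      zpow_add₀ hx, zpow_add₀ hy]
    ring

section FractionRing

variable {A : Type*} [CommRing A]

theorem map_algebraMap_injective :
    Function.Injective (Polynomial.map (algebraMap A (FractionRing A))) :=
  Polynomial.map_injective _ (IsFractionRing.injective _ _)

variable [IsDomain A]

theorem exists_map_algebraMap_eq_C_mul (p : (FractionRing A)[X]) :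
    ∃ (b : A) (P : A[X]), b ≠ 0 ∧
      P.map (algebraMap A (FractionRing A)) = C (algebraMap _ _ b) * p := by
  obtain ⟨b, hb, h⟩ := IsLocalization.integerNormalization_spec (nonZeroDivisors A) p
  refine ⟨b, IsLocalization.integerNormalization (nonZeroDivisors A) p,
    nonZeroDivisors.ne_zero hb, ?_⟩
  ext i
  simp [h, Algebra.smul_def]

theorem exists_dvd_C_mul_of_map_dvd_map {P Q : A[X]}
    (h : P.map (algebraMap A (FractionRing A)) ∣ Q.map (algebraMap A (FractionRing A))) :
    ∃ d : A, d ≠ 0 ∧ P ∣ C d * Q := by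
  obtain ⟨e, he⟩ := h
  obtain ⟨d, E, hd, hE⟩ := exists_map_algebraMap_eq_C_mul e
  refine ⟨d, hd, E, map_algebraMap_injective ?_⟩
  rw [Polynomial.map_mul, Polynomial.map_mul, Polynomial.map_C, he, hE]
  ring

theorem exists_mul_add_mul_derivative_eq_C {R : A[X]}
    (h : (R.map (algebraMap A (FractionRing A))).Separable) :
    ∃ (d : A) (P Q : A[X]), d ≠ 0 ∧ P * R + Q * derivative R = C d := by
  obtain ⟨a, b, hab⟩ := h
  obtain ⟨d, P, hd, hP⟩ := exists_map_algebraMap_eq_C_mul a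
  obtain ⟨e, Q, he, hQ⟩ := exists_map_algebraMap_eq_C_mul b
  refine ⟨d * e, C e * P, C d * Q, mul_ne_zero hd he, map_algebraMap_injective ?_⟩
  rw [Polynomial.derivative_map] at hab
  simp only [Polynomial.map_mul, Polynomial.map_add, Polynomial.map_C, map_mul, hP, hQ]
  linear_combination C (algebraMap _ (FractionRing A) d) * C (algebraMap _ (FractionRing A) e) * hab

theorem exists_separable_map_radical [CharZero A] {Q : A[X]} (hQ : Q ≠ 0) :
    ∃ (R : A[X]) (k : ℕ), (R.map (algebraMap A (FractionRing A))).Separable ∧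
      R.map (algebraMap A (FractionRing A)) ∣ Q.map (algebraMap A (FractionRing A)) ∧
      Q.map (algebraMap A (FractionRing A)) ∣ (R ^ k).map (algebraMap A (FractionRing A)) := by
  classical
  have : CharZero (FractionRing A) := IsFractionRing.charZero_of_isFractionRing A
  let ρ := UniqueFactorizationMonoid.radical (Q.map (algebraMap A (FractionRing A)))
  obtain ⟨b, R, hb, hR⟩ := exists_map_algebraMap_eq_C_mul ρ
  have hunit : IsUnit (C (algebraMap A (FractionRing A) b)) :=
    Polynomial.isUnit_C.2 ((map_ne_zero_iff _ (IsFractionRing.injective A _)).2 hb).isUnit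
  obtain ⟨k, hk⟩ := UniqueFactorizationMonoid.exists_dvd_radical_self_pow
    ((Polynomial.map_ne_zero_iff (IsFractionRing.injective A (FractionRing A))).2 hQ)
  refine ⟨R, k, ?_, ?_, ?_⟩
  · rw [hR, PerfectField.separable_iff_squarefree]
    exact UniqueFactorizationMonoid.squarefree_radical.squarefree_of_dvd
      (hunit.mul_left_dvd.2 dvd_rfl)
  · rw [hR, hunit.mul_left_dvd]
    exact UniqueFactorizationMonoid.radical_dvd_self
  · rw [Polynomial.map_pow, hR, mul_pow, (hunit.pow k).dvd_mul_left]
    exact hk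

theorem exists_evalEval_eq_zero_iff_separable {K : Type*} [Field K] [CharZero K] {Q : K[X][Y]}
    (hQ : Q ≠ 0) :
    ∃ (R : K[X][Y]) (d : K[X]), d ≠ 0 ∧ ∀ x y : K, d.eval x ≠ 0 →
      ((Q.evalEval x y = 0 ↔ R.evalEval x y = 0) ∧
        (R.evalEval x y = 0 → (derivative R).evalEval x y ≠ 0)) := by
  obtain ⟨R, k, hsep, hRQ, hQR⟩ := exists_separable_map_radical hQ
  obtain ⟨d₁, hd₁, E, hE⟩ := exists_dvd_C_mul_of_map_dvd_map hRQ
  obtain ⟨d₂, hd₂, F, hF⟩ := exists_dvd_C_mul_of_map_dvd_map hQR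
  obtain ⟨d₃, A, B, hd₃, hAB⟩ := exists_mul_add_mul_derivative_eq_C hsep
  refine ⟨R, d₁ * d₂ * d₃, mul_ne_zero (mul_ne_zero hd₁ hd₂) hd₃, fun x y hd => ?_⟩
  simp only [Polynomial.eval_mul, mul_ne_zero_iff] at hd
  obtain ⟨⟨h₁, h₂⟩, h₃⟩ := hd
  replace hE := congrArg (Polynomial.evalEval x y) hE
  replace hF := congrArg (Polynomial.evalEval x y) hF
  replace hAB := congrArg (Polynomial.evalEval x y) hAB
  simp only [Polynomial.evalEval_mul, Polynomial.evalEval_C, Polynomial.evalEval_add,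
    Polynomial.evalEval_pow] at hE hF hAB
  refine ⟨⟨fun h => ?_, fun h => ?_⟩, fun h h' => ?_⟩
  · rw [h, zero_mul, mul_eq_zero, or_iff_right h₂] at hF
    exact eq_zero_of_pow_eq_zero hF
  · rwa [h, zero_mul, mul_eq_zero, or_iff_right h₁] at hE
  · rw [h, h', mul_zero, mul_zero, zero_add] at hAB
    exact h₃ hAB.symm

end FractionRing

theorem norm_leadingCoeff_mul_le_of_isRoot {K : Type*} [NormedDivisionRing K] {P : K[X]} {a : K}
    (h : P.IsRoot a) :
    ‖P.leadingCoeff * a‖ ≤ ∑ i ∈ Finset.range (P.natDegree + 1), ‖P.coeff i‖ := by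
  rcases eq_or_ne P 0 with rfl | hP
  · simp
  have hlc : ‖P.leadingCoeff‖₊ ≠ 0 := nnnorm_ne_zero_iff.2 (Polynomial.leadingCoeff_ne_zero.2 hP)
  have hsup : (Finset.range P.natDegree).sup (fun i => ‖P.coeff i‖₊) ≤
      ∑ i ∈ Finset.range P.natDegree, ‖P.coeff i‖₊ :=
    Finset.sup_le fun i hi => Finset.single_le_sum (f := fun i => ‖P.coeff i‖₊)
      (fun _ _ => zero_le) hi
  have hbound : ‖P.leadingCoeff * a‖₊ ≤ ∑ i ∈ Finset.range (P.natDegree + 1), ‖P.coeff i‖₊ := by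
    calc ‖P.leadingCoeff * a‖₊ ≤ ‖P.leadingCoeff‖₊ * P.cauchyBound := by
          rw [nnnorm_mul]; gcongr; exact (h.norm_lt_cauchyBound hP).le
      _ = (Finset.range P.natDegree).sup (fun i => ‖P.coeff i‖₊) + ‖P.leadingCoeff‖₊ := by
          rw [Polynomial.cauchyBound, mul_add, mul_div_cancel₀ _ hlc, mul_one]
      _ ≤ _ := by rw [Finset.sum_range_succ]; gcongr; exact le_rfl
  simpa [← NNReal.coe_le_coe] using hbound

theorem norm_eval_leadingCoeff_mul_le {K : Type*} [NormedField K] {Q : K[X][Y]} {x y : K}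
    (hl : Q.leadingCoeff.eval x ≠ 0) (h : Q.evalEval x y = 0) :
    ‖Q.leadingCoeff.eval x * y‖ ≤ ∑ i ∈ Finset.range (Q.natDegree + 1), ‖(Q.coeff i).eval x‖ := by
  have hroot : (Q.map (Polynomial.evalRingHom x)).IsRoot y := by
    rwa [Polynomial.IsRoot, Polynomial.map_evalRingHom_eval]
  simpa [Polynomial.leadingCoeff_map_of_leadingCoeff_ne_zero (Polynomial.evalRingHom x) hl,
    Polynomial.natDegree_map_of_leadingCoeff_ne_zero (Polynomial.evalRingHom x) hl]
    using norm_leadingCoeff_mul_le_of_isRoot hroot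

theorem evalEval_eq_sum_range {K : Type*} [CommSemiring K] (Q : K[X][Y]) (x y : K) :
    Q.evalEval x y = ∑ i ∈ Finset.range (Q.natDegree + 1), (Q.coeff i).eval x * y ^ i := by
  simp [Polynomial.evalEval, Polynomial.eval_eq_sum_range (p := Q), Polynomial.eval_finsetSum]

section NormedField

variable {𝕜 : Type*} [NontriviallyNormedField 𝕜]

theorem contDiff_evalEval (Q : 𝕜[X][Y]) {n : WithTop ℕ∞} :
    ContDiff 𝕜 n fun z : 𝕜 × 𝕜 => Q.evalEval z.1 z.2 := by
  simp only [evalEval_eq_sum_range]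
  refine ContDiff.sum fun i _ => ContDiff.mul ?_ (by fun_prop)
  have hcoeff : ContDiff 𝕜 n fun x => (Q.coeff i).eval x := by
    simpa only [Polynomial.coe_aeval_eq_eval] using (Q.coeff i).contDiff_aeval (𝕜 := 𝕜) n
  exact hcoeff.comp contDiff_fst

theorem continuous_evalEval (Q : 𝕜[X][Y]) : Continuous fun z : 𝕜 × 𝕜 => Q.evalEval z.1 z.2 :=
  (contDiff_evalEval Q (n := 0)).continuous

theorem hasDerivAt_evalEval (Q : 𝕜[X][Y]) (x y : 𝕜) :
    HasDerivAt (fun y => Q.evalEval x y) ((derivative Q).evalEval x y) y := by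
  have h := (Q.map (Polynomial.evalRingHom x)).hasDerivAt y
  simpa only [Polynomial.derivative_map, Polynomial.map_evalRingHom_eval] using h

end NormedField

theorem exists_annulus_bound {𝕜 : Type*} [NontriviallyNormedField 𝕜] {Q : 𝕜[X][Y]} {w : 𝕜}
    (h0 : (Q.coeff 0).eval w ≠ 0) (hl : Q.leadingCoeff.eval w ≠ 0) :
    ∃ a b : ℝ, 0 < a ∧ ∀ᶠ x in 𝓝 w, ∀ y, Q.evalEval x y = 0 → a ≤ ‖y‖ ∧ ‖y‖ ≤ b := by
  have hne : Q.evalEval w 0 ≠ 0 := by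
    simpa [Polynomial.evalEval, ← Polynomial.coeff_zero_eq_eval_zero] using h0
  have hnhds := (continuous_evalEval Q).continuousAt.eventually_ne (x := (w, 0)) hne
  rw [nhds_prod_eq] at hnhds
  obtain ⟨px, hpx, py, hpy, hxy⟩ := Filter.eventually_prod_iff.1 hnhds
  obtain ⟨a, ha, hball⟩ := Metric.eventually_nhds_iff.1 hpy
  let T : 𝕜 → ℝ := fun x => (∑ i ∈ Finset.range (Q.natDegree + 1), ‖(Q.coeff i).eval x‖) /
    ‖Q.leadingCoeff.eval x‖
  have hT : ContinuousAt T w :=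
    ContinuousAt.div (by fun_prop) (by fun_prop) (norm_ne_zero_iff.2 hl)
  have hlc : ContinuousAt (fun x => Q.leadingCoeff.eval x) w := by fun_prop
  refine ⟨a, T w + 1, ha, ?_⟩
  filter_upwards [hpx, hT.eventually_lt_const (lt_add_one _), hlc.eventually_ne hl]
    with x hx hTx hlx y hy
  constructor
  · by_contra! hlt
    exact hxy hx (hball (by simpa using hlt)) hy
  · refine le_trans ?_ hTx.le
    rw [le_div_iff₀ (norm_pos_iff.2 hlx), mul_comm, ← norm_mul]
    exact norm_eval_leadingCoeff_mul_le hlx hy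

theorem exists_root_branch {𝕜 : Type*} [RCLike 𝕜] {R : 𝕜[X][Y]} {w z : 𝕜}
    (h : R.evalEval w z = 0) (h' : (derivative R).evalEval w z ≠ 0) :
    ∃ ω : 𝕜 → 𝕜, DifferentiableAt 𝕜 ω w ∧ ω w = z ∧ (∃ N ∈ 𝓝 w, ContinuousOn ω N) ∧
      (∀ᶠ x in 𝓝 w, R.evalEval x (ω x) = 0) ∧
      ∀ᶠ q in 𝓝 (w, z), R.evalEval q.1 q.2 = 0 → ω q.1 = q.2 := by
  let f : 𝕜 × 𝕜 → 𝕜 := fun q => R.evalEval q.1 q.2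
  have hstrict : HasStrictFDerivAt f (fderiv 𝕜 f (w, z)) (w, z) :=
    (contDiff_evalEval R).contDiffAt.hasStrictFDerivAt one_ne_zero
  have hpartial : fderiv 𝕜 f (w, z) (0, 1) = (derivative R).evalEval w z :=
    (hstrict.hasFDerivAt.comp_hasDerivAt z
      ((hasDerivAt_const z w).prodMk (hasDerivAt_id z))).unique (hasDerivAt_evalEval R w z)
  have hinv : (fderiv 𝕜 f (w, z) ∘L .inr 𝕜 𝕜 𝕜).IsInvertible := by
    refine ⟨ContinuousLinearEquiv.unitsEquivAut 𝕜 (Units.mk0 _ h'), ?_⟩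
    ext
    simp [hpartial]
  have hω := hstrict.hasStrictFDerivAt_implicitFunctionOfProdDomain hinv
  have hiff := hstrict.eventually_apply_eq_iff_implicitFunctionOfProdDomain hinv
  refine ⟨hstrict.implicitFunctionOfProdDomain hinv, hω.hasFDerivAt.differentiableAt,
    hiff.self_of_nhds.1 rfl, ?_, ?_, ?_⟩
  · obtain ⟨K, N, hN, hlip⟩ := hω.exists_lipschitzOnWith
    exact ⟨N, hN, hlip.continuousOn⟩
  · filter_upwards [hstrict.eventually_apply_implicitFunctionOfProdDomain hinv] with x hx
    exact hx.trans h
  · filter_upwards [hiff] with q hq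
    exact fun hq0 => hq.1 (hq0.trans h.symm)

/-! ### Curves parametrised by the twice punctured plane -/

theorem eqOn_of_eqOn_diff_finite {α β : Type*} [TopologicalSpace α] [T1Space α]
    [∀ x : α, (𝓝[≠] x).NeBot] [TopologicalSpace β] [T2Space β] {U T : Set α} (hU : IsOpen U)
    (hT : T.Finite) {f g : α → β} (hf : ContinuousOn f U) (hg : ContinuousOn g U)
    (h : EqOn f g (U \ T)) : EqOn f g U := by
  refine h.of_subset_closure hf hg sdiff_subset ?_
  simpa only [sdiff_eq, univ_inter] using (dense_univ.sdiff_finite hT).open_subset_closure_inter hU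

theorem eventually_eq_one_of_pow_eq_one {N : ℕ} (hN : N ≠ 0) :
    ∀ᶠ z in 𝓝 (1 : ℂ), z ^ N = 1 → z = 1 := by
  have hfin : ({z : ℂ | z ^ N = 1} \ {1}).Finite := by
    refine Set.Finite.subset (Polynomial.nthRoots N (1 : ℂ)).toFinset.finite_toSet fun z hz => ?_
    simpa [Polynomial.mem_nthRoots (Nat.pos_of_ne_zero hN)] using hz.1
  filter_upwards [hfin.isClosed.isOpen_compl.mem_nhds (by simp : (1 : ℂ) ∈ _)] with z hz h
  by_contra h1
  exact hz ⟨h, h1⟩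

/-- The model of the sphere with three punctures, which are placed at `0`, `1` and `∞`. -/
def twicePuncturedPlane : Set ℂ := {t | t ≠ 0 ∧ t ≠ 1}

theorem twicePuncturedPlane_diff_eq_compl (T : Set ℂ) :
    twicePuncturedPlane \ T = ({0, 1} ∪ T)ᶜ := by
  ext
  simp [twicePuncturedPlane, not_or]

theorem twicePuncturedPlane_eq_univ_diff :
    twicePuncturedPlane = univ \ (({0, 1} : Finset ℂ) : Set ℂ) := by
  ext
  simp [twicePuncturedPlane]

theorem isOpen_twicePuncturedPlane : IsOpen twicePuncturedPlane :=
  twicePuncturedPlane_eq_univ_diff ▸ isOpen_univ.sdiff (Finset.finite_toSet _).isClosed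

theorem isPreconnected_twicePuncturedPlane_diff {T : Set ℂ} (hT : T.Finite) :
    IsPreconnected (twicePuncturedPlane \ T) := by
  rw [twicePuncturedPlane_diff_eq_compl]
  exact (((toFinite _).union hT).countable.isConnected_compl_of_one_lt_rank
    (by simp [Complex.rank_real_complex])).isPreconnected

theorem prod_zero_one_sub_zpow (n : ℂ → ℤ) (t : ℂ) :
    ∏ q ∈ {0, 1}, (t - q) ^ n q = t ^ n 0 * (t - 1) ^ n 1 := by
  rw [Finset.prod_pair zero_ne_one, sub_zero]

theorem eq_zero_of_prod_zpow_eq_exp {P : Finset ℂ} {n : ℂ → ℤ} {g : ℂ → ℂ}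
    (hg : ContinuousOn g (univ \ P))
    (h : ∀ t ∈ univ \ (P : Set ℂ), ∏ p ∈ P, (t - p) ^ n p = Complex.exp (g t)) :
    ∀ p ∈ P, n p = 0 := by
  intro p hp
  have hone := HasWinding.eventually_of_prod_zpow_mul_exp P n (F := fun _ => 1) univ_mem hp hg.neg
    fun t ht => by rw [h t ht, Pi.neg_apply, ← Complex.exp_add, add_neg_cancel, Complex.exp_zero]
  obtain ⟨r, hwind, hr⟩ := (hone.and self_mem_nhdsWithin).exists
  exact hwind.unique hr (HasWinding.const one_ne_zero p r)

theorem eq_zero_of_zpow_mul_zpow_eq_exp {i j : ℤ} {g : ℂ → ℂ}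
    (hg : ContinuousOn g twicePuncturedPlane)
    (h : ∀ t ∈ twicePuncturedPlane, t ^ i * (t - 1) ^ j = Complex.exp (g t)) :
    i = 0 ∧ j = 0 := by
  rw [twicePuncturedPlane_eq_univ_diff] at hg h
  have hn := eq_zero_of_prod_zpow_eq_exp (n := fun q => if q = 0 then i else j) hg fun t ht => by
    simpa only [prod_zero_one_sub_zpow, if_true, if_neg one_ne_zero] using h t ht
  exact ⟨by simpa using hn 0 (by simp), by simpa using hn 1 (by simp)⟩

-- The logarithmic windings of `t` and `t - 1` are independent, so both cannot be multiples of the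
-- one of `v`.
theorem false_of_eq_zpow_mul_exp {v f g : ℂ → ℂ} {m n : ℤ}
    (hv : ∀ t ∈ twicePuncturedPlane, v t ≠ 0) (hf : ContinuousOn f twicePuncturedPlane)
    (hg : ContinuousOn g twicePuncturedPlane)
    (hm : ∀ t ∈ twicePuncturedPlane, t = v t ^ m * Complex.exp (f t))
    (hn : ∀ t ∈ twicePuncturedPlane, t - 1 = v t ^ n * Complex.exp (g t)) : False := by
  have hmn := eq_zero_of_zpow_mul_zpow_eq_exp (i := n) (j := -m)
    (g := fun t => n * f t + (-m : ℤ) * g t)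
    ((continuousOn_const.mul hf).add (continuousOn_const.mul hg)) fun t ht => by
      rw [hn t ht, Complex.exp_add, Complex.exp_int_mul, Complex.exp_int_mul]
      nth_rewrite 1 [hm t ht]
      rw [mul_zpow, mul_zpow, ← zpow_mul, ← zpow_mul, mul_mul_mul_comm, ← zpow_add₀ (hv t ht),
        show m * n + n * -m = 0 by ring, zpow_zero, one_mul]
  refine one_ne_zero (eq_zero_of_zpow_mul_zpow_eq_exp (i := 1) (j := 0) hf fun t ht => ?_).1
  simpa [neg_eq_zero.1 hmn.2] using hm t ht

theorem infinite_twicePuncturedPlane : twicePuncturedPlane.Infinite := by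
  rw [twicePuncturedPlane_eq_univ_diff]
  exact infinite_univ.sdiff (Finset.finite_toSet _)

theorem exists_eq_C_X_sub_C_pow_mul {K : Type*} [Field K] {Q : K[X][Y]} (hQ : Q ≠ 0) (c : K) :
    ∃ (k : ℕ) (P : K[X][Y]), Q = C (X - C c) ^ k * P ∧ P.map (Polynomial.evalRingHom c) ≠ 0 := by
  have hunit : ¬ IsUnit (C (X - C c) : K[X][Y]) :=
    Polynomial.isUnit_C.not.2 (Polynomial.not_isUnit_X_sub_C c)
  obtain ⟨P, hP, hdvd⟩ :=
    (FiniteMultiplicity.of_not_isUnit hunit hQ).exists_eq_pow_mul_and_not_dvd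
  refine ⟨_, P, hP, fun h0 => hdvd ((Polynomial.C_dvd_iff_dvd_coeff _ _).2 fun i => ?_)⟩
  rw [Polynomial.dvd_iff_isRoot]
  simpa using congrArg (fun p => Polynomial.coeff p i) h0

/-- The zeros of a bivariate polynomial outside the coordinate axes. -/
def torusZeros (Q : ℂ[X][Y]) : Set (ℂ × ℂ) :=
  {q | q.1 ≠ 0 ∧ q.2 ≠ 0 ∧ Q.evalEval q.1 q.2 = 0}

/-- `(u, v)` embeds the twice punctured plane into the zeros of `Q` outside the coordinate axes. The
continuous left inverse `θ` is defined on all these zeros and is a right inverse only up to `N`-th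
roots of unity (in the first coordinate), because `(u, v)` is a lift of a given curve through a
monomial map. -/
structure IsCurveParam (u v : ℂ → ℂ) (θ : ℂ × ℂ → ℂ) (Q : ℂ[X][Y]) (N : ℕ) : Prop where
  continuousOn_fst : ContinuousOn u twicePuncturedPlane
  continuousOn_snd : ContinuousOn v twicePuncturedPlane
  mem_torusZeros : ∀ t ∈ twicePuncturedPlane, (u t, v t) ∈ torusZeros Q
  continuousOn_inv : ContinuousOn θ (torusZeros Q)
  mapsTo_inv : MapsTo θ (torusZeros Q) twicePuncturedPlane
  inv_apply : ∀ t ∈ twicePuncturedPlane, θ (u t, v t) = t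
  fst_inv_pow : ∀ q ∈ torusZeros Q, u (θ q) ^ N = q.1 ^ N
  ne_zero : N ≠ 0
  coeff_zero_ne_zero : Q.coeff 0 ≠ 0

/-- Near `w`, the roots of `Q` over a point are bounded away from `0` and `∞` and form disjoint
holomorphic branches. -/
structure IsGenericValue (Q : ℂ[X][Y]) (w : ℂ) : Prop where
  ne_zero : w ≠ 0
  coeff_zero : (Q.coeff 0).eval w ≠ 0
  leadingCoeff : Q.leadingCoeff.eval w ≠ 0
  exists_branch : ∀ z, Q.evalEval w z = 0 → ∃ ω : ℂ → ℂ, DifferentiableAt ℂ ω w ∧ ω w = z ∧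
    (∃ N ∈ 𝓝 w, ContinuousOn ω N) ∧ (∀ᶠ x in 𝓝 w, Q.evalEval x (ω x) = 0) ∧
      ∀ᶠ q in 𝓝 (w, z), Q.evalEval q.1 q.2 = 0 → ω q.1 = q.2

theorem exists_finset_isGenericValue {Q : ℂ[X][Y]} (hQ : Q.coeff 0 ≠ 0) :
    ∃ B : Finset ℂ, 0 ∈ B ∧ ∀ w ∉ B, IsGenericValue Q w := by
  classical
  have hQ0 : Q ≠ 0 := fun h => hQ (by simp [h])
  obtain ⟨R, d, hd, hR⟩ := exists_evalEval_eq_zero_iff_separable hQ0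
  let P : ℂ[X] := X * d * Q.coeff 0 * Q.leadingCoeff
  have hP : P ≠ 0 := by simp [P, hd, hQ, hQ0, Polynomial.X_ne_zero]
  have hmem : ∀ w ∉ P.roots.toFinset, w ≠ 0 ∧ d.eval w ≠ 0 ∧ (Q.coeff 0).eval w ≠ 0 ∧
      Q.leadingCoeff.eval w ≠ 0 := by
    intro w hw
    simpa [hP, P, not_or, and_assoc] using hw
  refine ⟨P.roots.toFinset, ?_, fun w hw => ?_⟩
  · rw [Multiset.mem_toFinset, Polynomial.mem_roots hP]
    simp [P, Polynomial.IsRoot]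
  obtain ⟨hw0, hdw, hc, hl⟩ := hmem w hw
  refine ⟨hw0, hc, hl, fun z hz => ?_⟩
  have hzR := (hR w z hdw).1.1 hz
  obtain ⟨ω, hdiff, hωw, hcont, hroot, huniq⟩ := exists_root_branch hzR ((hR w z hdw).2 hzR)
  have hdnear : ∀ᶠ x in 𝓝 w, d.eval x ≠ 0 :=
    (show ContinuousAt (fun x => d.eval x) w by fun_prop).eventually_ne hdw
  refine ⟨ω, hdiff, hωw, hcont, ?_, ?_⟩
  · filter_upwards [hroot, hdnear] with x hx hdx using (hR x _ hdx).1.2 hx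
  · filter_upwards [huniq, (continuousAt_fst (p := (w, z))).tendsto.eventually hdnear]
      with q hq hdq h using hq ((hR _ _ hdq).1.1 h)

namespace IsCurveParam

variable {u v : ℂ → ℂ} {θ : ℂ × ℂ → ℂ} {Q : ℂ[X][Y]} {N : ℕ}

theorem fst_ne_zero (h : IsCurveParam u v θ Q N) {t : ℂ} (ht : t ∈ twicePuncturedPlane) :
    u t ≠ 0 := (h.mem_torusZeros t ht).1

theorem snd_ne_zero (h : IsCurveParam u v θ Q N) {t : ℂ} (ht : t ∈ twicePuncturedPlane) :
    v t ≠ 0 := (h.mem_torusZeros t ht).2.1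

theorem evalEval_eq_zero (h : IsCurveParam u v θ Q N) {t : ℂ} (ht : t ∈ twicePuncturedPlane) :
    Q.evalEval (u t) (v t) = 0 := (h.mem_torusZeros t ht).2.2

theorem continuousAt_fst (h : IsCurveParam u v θ Q N) {t : ℂ} (ht : t ∈ twicePuncturedPlane) :
    ContinuousAt u t := h.continuousOn_fst.continuousAt (isOpen_twicePuncturedPlane.mem_nhds ht)

theorem continuousAt_snd (h : IsCurveParam u v θ Q N) {t : ℂ} (ht : t ∈ twicePuncturedPlane) :
    ContinuousAt v t := h.continuousOn_snd.continuousAt (isOpen_twicePuncturedPlane.mem_nhds ht)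

theorem evalEval_eq_zero_of_fst_eq (h : IsCurveParam u v θ Q N) {c : ℂ}
    (hc : ∀ t ∈ twicePuncturedPlane, u t = c) (z : ℂ) : Q.evalEval c z = 0 := by
  have hinj : InjOn v twicePuncturedPlane := fun s hs t ht hst => by
    rw [← h.inv_apply s hs, ← h.inv_apply t ht, hc s hs, hc t ht, hst]
  have hzero : Q.map (Polynomial.evalRingHom c) = 0 := by
    refine Polynomial.eq_zero_of_infinite_isRoot _
      ((infinite_twicePuncturedPlane.image hinj).mono ?_)
    rintro _ ⟨t, ht, rfl⟩
    rw [mem_ofPred, Polynomial.IsRoot, Polynomial.map_evalRingHom_eval, ← hc t ht]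
    exact h.evalEval_eq_zero ht
  rw [← Polynomial.map_evalRingHom_eval, hzero, Polynomial.eval_zero]

theorem exists_fst_ne (h : IsCurveParam u v θ Q N) (c : ℂ) :
    ∃ t ∈ twicePuncturedPlane, u t ≠ c := by
  by_contra! hc
  obtain ⟨t₀, ht₀⟩ := infinite_twicePuncturedPlane.nonempty
  have hmem : ∀ z ∈ univ \ (({0} : Finset ℂ) : Set ℂ), (c, z) ∈ torusZeros Q := fun z hz =>
    ⟨hc t₀ ht₀ ▸ h.fst_ne_zero ht₀, by simpa using hz, h.evalEval_eq_zero_of_fst_eq hc z⟩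
  have hσ : ContinuousOn (fun z => θ (c, z)) (univ \ (({0} : Finset ℂ) : Set ℂ)) :=
    h.continuousOn_inv.comp (by fun_prop) hmem
  obtain ⟨m, f, hf, hm⟩ := exists_prod_zpow_mul_exp convex_univ isOpen_univ _ (subset_univ _)
    hσ fun z hz => (h.mapsTo_inv (hmem z hz)).1
  obtain ⟨n, g, hg, hn⟩ := exists_prod_zpow_mul_exp convex_univ isOpen_univ _ (subset_univ _)
    (hσ.sub (continuousOn_const (c := 1))) fun z hz =>
      sub_ne_zero.2 (h.mapsTo_inv (hmem z hz)).2
  have hv : MapsTo v twicePuncturedPlane (univ \ (({0} : Finset ℂ) : Set ℂ)) := fun t ht => by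
    simpa using h.snd_ne_zero ht
  have hθ : ∀ t ∈ twicePuncturedPlane, θ (c, v t) = t := fun t ht => by
    rw [← hc t ht, h.inv_apply t ht]
  exact false_of_eq_zpow_mul_exp (fun t => h.snd_ne_zero) (hf.comp h.continuousOn_snd hv)
    (hg.comp h.continuousOn_snd hv)
    (fun t ht => by simpa [hθ t ht] using hm (v t) (hv ht))
    (fun t ht => by simpa [hθ t ht] using hn (v t) (hv ht))

theorem finite_fst_eq_and_evalEval_eq_zero (h : IsCurveParam u v θ Q N) {P : ℂ[X][Y]} {c : ℂ}
    (hP : P.map (Polynomial.evalRingHom c) ≠ 0) :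
    {t ∈ twicePuncturedPlane | u t = c ∧ P.evalEval (u t) (v t) = 0}.Finite := by
  classical
  refine ((P.map (Polynomial.evalRingHom c)).roots.toFinset.finite_toSet.image
    fun z => θ (c, z)).subset ?_
  rintro t ⟨ht, rfl, htP⟩
  refine ⟨v t, ?_, h.inv_apply t ht⟩
  rwa [Finset.mem_coe, Multiset.mem_toFinset, Polynomial.mem_roots hP, Polynomial.IsRoot,
    Polynomial.map_evalRingHom_eval]

theorem finite_fiber (h : IsCurveParam u v θ Q N) (c : ℂ) :
    {t ∈ twicePuncturedPlane | u t = c}.Finite := by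
  have hQ : Q ≠ 0 := fun h0 => h.coeff_zero_ne_zero (by simp [h0])
  obtain ⟨k, P, rfl, hP⟩ := exists_eq_C_X_sub_C_pow_mul hQ c
  set F : Set ℂ := {t ∈ twicePuncturedPlane | u t = c ∧ P.evalEval (u t) (v t) = 0}
  have hF : F.Finite := h.finite_fst_eq_and_evalEval_eq_zero hP
  have hzero : ∀ t ∈ twicePuncturedPlane, u t ≠ c → P.evalEval (u t) (v t) = 0 := by
    intro t ht htc
    have hQt := h.evalEval_eq_zero ht
    rw [Polynomial.evalEval_mul, Polynomial.evalEval_pow, Polynomial.evalEval_C] at hQt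
    refine (mul_eq_zero.1 hQt).resolve_left (pow_ne_zero _ ?_)
    simpa [sub_eq_zero] using htc
  have hcont : ContinuousOn (fun t => P.evalEval (u t) (v t)) twicePuncturedPlane :=
    (continuous_evalEval P).comp_continuousOn (h.continuousOn_fst.prodMk h.continuousOn_snd)
  have hopen₁ := hcont.isOpen_inter_preimage isOpen_twicePuncturedPlane (isOpen_ne (x := (0 : ℂ)))
  have hopen₂ := h.continuousOn_fst.isOpen_inter_preimage isOpen_twicePuncturedPlane
    (isOpen_ne (x := c))
  have hcover : twicePuncturedPlane \ F ⊆
      twicePuncturedPlane ∩ (fun t => P.evalEval (u t) (v t)) ⁻¹' {z | z ≠ 0} ∪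
        twicePuncturedPlane ∩ u ⁻¹' {z | z ≠ c} := by
    intro t ht
    by_cases htc : u t = c
    · exact Or.inl ⟨ht.1, fun h0 => ht.2 ⟨ht.1, htc, h0⟩⟩
    · exact Or.inr ⟨ht.1, htc⟩
  rcases (isPreconnected_twicePuncturedPlane_diff hF).subset_or_subset hopen₁ hopen₂
    (Set.disjoint_left.2 fun t ht₁ ht₂ => ht₁.2 (hzero t ht₂.1 ht₂.2)) hcover with hsub | hsub
  · have heq : EqOn u (fun _ => c) twicePuncturedPlane :=
      eqOn_of_eqOn_diff_finite isOpen_twicePuncturedPlane hF h.continuousOn_fst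
        continuousOn_const fun t ht => by_contra fun htc => (hsub ht).2 (hzero t ht.1 htc)
    obtain ⟨t, ht, htc⟩ := h.exists_fst_ne c
    exact absurd (heq ht) htc
  · exact hF.subset fun t ht => by_contra fun htF => (hsub ⟨ht.1, htF⟩).2 ht.2

theorem eventually_fst_inv_eq (h : IsCurveParam u v θ Q N) {s : ℂ} {ω : ℂ → ℂ}
    (hs : s ∈ twicePuncturedPlane) (hωc : ContinuousAt ω (u s)) (hωs : ω (u s) = v s)
    (hZ : ∀ᶠ x in 𝓝 (u s), (x, ω x) ∈ torusZeros Q) :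
    ∀ᶠ x in 𝓝 (u s), u (θ (x, ω x)) = x := by
  have hσs : θ (u s, ω (u s)) = s := hωs ▸ h.inv_apply s hs
  have hσc : ContinuousAt (fun x => θ (x, ω x)) (u s) :=
    (h.continuousOn_inv (u s, ω (u s)) (hωs ▸ h.mem_torusZeros s hs)).tendsto.comp
      (tendsto_nhdsWithin_iff.2 ⟨continuousAt_id.prodMk hωc, hZ⟩)
  have hquot : Tendsto (fun x => u (θ (x, ω x)) / x) (𝓝 (u s)) (𝓝 1) := by
    have hu : Tendsto (fun x => u (θ (x, ω x))) (𝓝 (u s)) (𝓝 (u s)) :=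
      (h.continuousAt_fst hs).tendsto.comp (by simpa only [ContinuousAt, hσs] using hσc)
    simpa only [div_self (h.fst_ne_zero hs), Pi.div_def, id] using
      hu.div tendsto_id (h.fst_ne_zero hs)
  filter_upwards [hZ, hquot.eventually (eventually_eq_one_of_pow_eq_one h.ne_zero)] with x hx hone
  refine (div_eq_one_iff_eq hx.1).1 (hone ?_)
  rw [div_pow, h.fst_inv_pow _ hx, div_self (pow_ne_zero _ hx.1)]

theorem exists_local_section (h : IsCurveParam u v θ Q N) {s : ℂ} (hs : s ∈ twicePuncturedPlane)
    (hw : IsGenericValue Q (u s)) :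
    ∃ σ : ℂ → ℂ, σ (u s) = s ∧ (∃ O ∈ 𝓝 (u s), ContinuousOn σ O ∧ ∀ x ∈ O,
      σ x ∈ twicePuncturedPlane ∧ u (σ x) = x) ∧ ∀ᶠ t in 𝓝 s, σ (u t) = t := by
  obtain ⟨ω, -, hωs, ⟨N₀, hN₀, hωc⟩, hroot, huniq⟩ :=
    hw.exists_branch (v s) (h.evalEval_eq_zero hs)
  have hωat : ContinuousAt ω (u s) := hωc.continuousAt hN₀
  have hZ : ∀ᶠ x in 𝓝 (u s), (x, ω x) ∈ torusZeros Q := by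
    filter_upwards [hroot, hωat.eventually_ne (hωs ▸ h.snd_ne_zero hs),
      continuousAt_id.eventually_ne hw.ne_zero] with x hx hωx hx0 using ⟨hx0, hωx, hx⟩
  refine ⟨fun x => θ (x, ω x), by simpa only [hωs] using h.inv_apply s hs,
    ⟨_, inter_mem (inter_mem hN₀ hZ) (h.eventually_fst_inv_eq hs hωat hωs hZ), ?_,
      fun x hx => ⟨h.mapsTo_inv hx.1.2, hx.2⟩⟩, ?_⟩
  · exact h.continuousOn_inv.comp (continuousOn_id.prodMk (hωc.mono fun x hx => hx.1.1))
      fun x hx => hx.1.2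
  · have hcont := (h.continuousAt_fst hs).prodMk (h.continuousAt_snd hs)
    filter_upwards [hcont.eventually huniq, isOpen_twicePuncturedPlane.mem_nhds hs] with t ht htS
    rw [ht (h.evalEval_eq_zero htS)]
    exact h.inv_apply t htS

theorem exists_compact_preimage (h : IsCurveParam u v θ Q N) {w : ℂ} (hw : IsGenericValue Q w) :
    ∃ O ∈ 𝓝 w, ∃ K : Set ℂ, IsCompact K ∧ K ⊆ twicePuncturedPlane ∧
      ∀ t ∈ twicePuncturedPlane, u t ∈ O → t ∈ K := by
  obtain ⟨a, b, ha, hab⟩ := exists_annulus_bound hw.coeff_zero hw.leadingCoeff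
  have hev : ∀ᶠ x in 𝓝 w, x ≠ 0 ∧ ∀ y, Q.evalEval x y = 0 → a ≤ ‖y‖ ∧ ‖y‖ ≤ b :=
    (continuousAt_id.eventually_ne hw.ne_zero).and hab
  obtain ⟨ε, hε, hball⟩ := nhds_basis_closedBall.mem_iff.1 hev
  let Z : Set (ℂ × ℂ) := (closedBall w ε ×ˢ closedBall 0 b) ∩
    {q | a ≤ ‖q.2‖ ∧ Q.evalEval q.1 q.2 = 0}
  have hZc : IsCompact Z := by
    refine ((isCompact_closedBall w ε).prod (isCompact_closedBall 0 b)).inter_right ?_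
    exact (isClosed_le continuous_const continuous_snd.norm).inter
      (isClosed_eq (continuous_evalEval Q) continuous_const)
  have hZ : Z ⊆ torusZeros Q := by
    rintro q ⟨⟨hq1, -⟩, hqa, hq⟩
    exact ⟨(hball hq1).1, norm_pos_iff.1 (ha.trans_le hqa), hq⟩
  refine ⟨closedBall w ε, closedBall_mem_nhds w hε, θ '' Z,
    hZc.image_of_continuousOn (h.continuousOn_inv.mono hZ),
    (h.mapsTo_inv.mono_left hZ).image_subset, fun t ht hut => ?_⟩
  have hb := (hball hut).2 (v t) (h.evalEval_eq_zero ht)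
  exact ⟨(u t, v t), ⟨⟨hut, by simpa using hb.2⟩, hb.1, h.evalEval_eq_zero ht⟩,
    h.inv_apply t ht⟩

end IsCurveParam

/-! ### Ends and local indices -/

theorem tendsto_nhds_of_mapClusterPt {α E : Type*} [TopologicalSpace α] [MetricSpace E]
    [ProperSpace E] {L : Filter α} {U : Set α} {f : α → E}
    (hL : ∀ A ∈ L, ∃ A' ∈ L, A' ⊆ A ∧ IsPreconnected A') (hU : U ∈ L) (hf : ContinuousOn f U)
    (hfin : {x | MapClusterPt x L f}.Finite) {b : E} (hb : MapClusterPt b L f) :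
    Tendsto f L (𝓝 b) := by
  have hfar : ∀ᶠ ε in 𝓝 (0 : ℝ), ∀ x ∈ {x | MapClusterPt x L f}, x ≠ b → ε < dist x b := by
    rw [Filter.eventually_all_finite hfin]
    intro x _
    rw [eventually_imp_distrib_left]
    exact fun hxb => Iio_mem_nhds (dist_pos.2 hxb)
  rw [nhds_basis_ball.tendsto_right_iff]
  intro δ hδ
  obtain ⟨ε, ⟨hε, hεδ⟩, hε0⟩ := (((hfar.and (Iio_mem_nhds hδ)).filter_mono
    nhdsWithin_le_nhds).and (self_mem_nhdsWithin (s := Ioi (0 : ℝ)))).exists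
  have hsphere : ∀ᶠ t in L, f t ∉ sphere b ε := by
    by_contra hfreq
    obtain ⟨x, hx, hxcl⟩ := (isCompact_sphere b ε).exists_mapClusterPt_of_frequently
      (not_eventually.1 hfreq |>.mono fun t ht => not_not.1 ht)
    exact (hε x hxcl (ne_of_mem_sphere hx hε0.ne')).ne' hx
  obtain ⟨A, hA, hAsub, hAc⟩ := hL _ (inter_mem hU hsphere)
  obtain ⟨t₀, ht₀, ht₀A⟩ := ((hb.frequently (ball_mem_nhds b hε0)).and_eventually hA).exists
  have hsub : f '' A ⊆ ball b ε := by
    refine (hAc.image f (hf.mono fun t ht => (hAsub ht).1)).subset_left_of_subset_union isOpen_ball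
      (isClosed_closedBall (x := b) (ε := ε)).isOpen_compl
      (Set.disjoint_left.2 fun x hx hx' => hx' (ball_subset_closedBall hx)) ?_
      ⟨f t₀, ⟨t₀, ht₀A, rfl⟩, ht₀⟩
    rintro _ ⟨t, ht, rfl⟩
    rcases lt_or_ge ε (dist (f t) b) with hlt | hle
    · exact Or.inr fun h => hlt.not_ge h
    · exact Or.inl (hle.lt_of_ne (hAsub ht).2)
  filter_upwards [hA] with t ht using ball_subset_ball hεδ.le (hsub ⟨t, ht, rfl⟩)

theorem exists_tendsto_nhds_or_tendsto_cocompact {α E : Type*} [TopologicalSpace α]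
    [MetricSpace E] [ProperSpace E] {L : Filter α} {U : Set α} {f : α → E}
    (hL : ∀ A ∈ L, ∃ A' ∈ L, A' ⊆ A ∧ IsPreconnected A') (hU : U ∈ L) (hf : ContinuousOn f U)
    (hfin : {x | MapClusterPt x L f}.Finite) :
    (∃ b, MapClusterPt b L f ∧ Tendsto f L (𝓝 b)) ∨ Tendsto f L (cocompact E) := by
  by_cases hinf : Tendsto f L (cocompact E)
  · exact Or.inr hinf
  rw [hasBasis_cocompact.tendsto_right_iff] at hinf
  push Not at hinf
  obtain ⟨K, hK, hfK⟩ := hinf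
  obtain ⟨b, -, hb⟩ := hK.exists_mapClusterPt_of_frequently (hfK.mono fun t ht => by simpa using ht)
  exact Or.inl ⟨b, hb, tendsto_nhds_of_mapClusterPt hL hU hf hfin hb⟩

theorem exists_isPreconnected_subset_of_mem_nhdsNE (p : ℂ) (A : Set ℂ) (hA : A ∈ 𝓝[≠] p) :
    ∃ A' ∈ 𝓝[≠] p, A' ⊆ A ∧ IsPreconnected A' := by
  obtain ⟨r, hr, hball⟩ := Metric.mem_nhdsWithin_iff.1 hA
  refine ⟨ball p r ∩ {p}ᶜ, Metric.mem_nhdsWithin_iff.2 ⟨r, hr, Subset.rfl⟩, hball, ?_⟩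
  rw [← sdiff_eq, ← image_add_exp_re_lt_log hr]
  exact (convex_halfSpace_re_lt _).isPreconnected.image _ (by fun_prop)

theorem exp_image_log_lt_re {R : ℝ} (hR : 0 < R) :
    Complex.exp '' {ζ : ℂ | Real.log R < ζ.re} = (closedBall 0 R)ᶜ := by
  ext t
  simp only [mem_compl_iff, mem_closedBall_zero_iff, not_le]
  constructor
  · rintro ⟨ζ, hζ, rfl⟩
    rw [Complex.norm_exp]
    exact (Real.log_lt_iff_lt_exp hR).1 hζ
  · intro ht
    refine ⟨Complex.log t, ?_, Complex.exp_log (norm_pos_iff.1 (hR.trans ht))⟩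
    rw [mem_ofPred, Complex.log_re]
    exact Real.log_lt_log hR ht

theorem exists_isPreconnected_subset_of_mem_cocompact (A : Set ℂ) (hA : A ∈ cocompact ℂ) :
    ∃ A' ∈ cocompact ℂ, A' ⊆ A ∧ IsPreconnected A' := by
  rw [← Metric.cobounded_eq_cocompact] at hA
  obtain ⟨R, -, hRA⟩ := (Metric.hasBasis_cobounded_compl_closedBall (0 : ℂ)).mem_iff.1 hA
  refine ⟨(closedBall 0 (max R 1))ᶜ, (isCompact_closedBall 0 _).compl_mem_cocompact,
    (compl_subset_compl.2 (closedBall_subset_closedBall (le_max_left _ _))).trans hRA, ?_⟩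
  rw [← exp_image_log_lt_re (lt_max_of_lt_right one_pos)]
  exact (convex_halfSpace_re_gt _).isPreconnected.image _ (by fun_prop)

theorem eventually_sphere_subset_of_mem_nhdsNE {E : Type*} [PseudoMetricSpace E] (p : E) (A : Set E)
    (hA : A ∈ 𝓝[≠] p) : ∀ᶠ r in 𝓝[>] (0 : ℝ), sphere p r ⊆ A := by
  obtain ⟨ε, hε, hball⟩ := Metric.mem_nhdsWithin_iff.1 hA
  filter_upwards [self_mem_nhdsWithin, nhdsWithin_le_nhds (Iio_mem_nhds hε)] with r hr hrε t ht
  exact hball ⟨sphere_subset_ball hrε ht, ne_of_mem_sphere ht (ne_of_gt hr)⟩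

theorem eventually_sphere_subset_of_mem_cocompact {E : Type*} [PseudoMetricSpace E] [ProperSpace E]
    (p : E) (A : Set E) (hA : A ∈ cocompact E) : ∀ᶠ r in (atTop : Filter ℝ), sphere p r ⊆ A := by
  rw [← Metric.cobounded_eq_cocompact] at hA
  obtain ⟨R, -, hRA⟩ := (Metric.hasBasis_cobounded_compl_closedBall p).mem_iff.1 hA
  filter_upwards [eventually_gt_atTop R] with r hr t ht
  exact hRA fun h => hr.not_ge ((mem_sphere.1 ht).symm.trans_le h)

/-- `L` is the filter of neighbourhoods of an end of the twice punctured plane, and the circles of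
centre `q` go to this end as their radius goes along `R`. -/
structure IsEnd (L : Filter ℂ) (q : ℂ) (R : Filter ℝ) : Prop where
  exists_isPreconnected : ∀ A ∈ L, ∃ A' ∈ L, A' ⊆ A ∧ IsPreconnected A'
  mem : twicePuncturedPlane ∈ L
  compl_mem : ∀ K, IsCompact K → K ⊆ twicePuncturedPlane → Kᶜ ∈ L
  eventually_sphere_subset : ∀ A ∈ L, ∀ᶠ r in R, sphere q r ⊆ A

theorem isEnd_nhdsNE {p : ℂ} (hp : p ∉ twicePuncturedPlane) : IsEnd (𝓝[≠] p) p (𝓝[>] 0) where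
  exists_isPreconnected := exists_isPreconnected_subset_of_mem_nhdsNE p
  mem := by
    rw [twicePuncturedPlane_eq_univ_diff]
    exact nhdsNE_of_nhdsNE_sdiff_finite univ_mem (toFinite _)
  compl_mem K hK hKS := nhdsWithin_le_nhds (hK.isClosed.isOpen_compl.mem_nhds fun h => hp (hKS h))
  eventually_sphere_subset := eventually_sphere_subset_of_mem_nhdsNE p

theorem isEnd_cocompact : IsEnd (cocompact ℂ) 0 atTop where
  exists_isPreconnected := exists_isPreconnected_subset_of_mem_cocompact
  mem := by
    rw [twicePuncturedPlane_eq_univ_diff, ← compl_eq_univ_sdiff]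
    exact (Finset.finite_toSet _).isCompact.compl_mem_cocompact
  compl_mem _ hK _ := hK.compl_mem_cocompact
  eventually_sphere_subset := eventually_sphere_subset_of_mem_cocompact 0

namespace IsEnd

variable {L : Filter ℂ} {q : ℂ} {R : Filter ℝ} {u : ℂ → ℂ}

theorem eventually_hasWinding_sub_of_tendsto_nhds (hE : IsEnd L q R)
    (hu : ContinuousOn u twicePuncturedPlane) {b w : ℂ} (hb : Tendsto u L (𝓝 b)) (hbw : b ≠ w) :
    ∀ᶠ r in R, HasWinding (fun t => u t - w) q r 0 := by
  have hpos : 0 < ‖b - w‖ := norm_pos_iff.2 (sub_ne_zero.2 hbw)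
  filter_upwards [hE.eventually_sphere_subset _ hE.mem,
    hE.eventually_sphere_subset _ (hb.eventually (ball_mem_nhds b hpos))] with r hr hnear
  refine (HasWinding.const (sub_ne_zero.2 hbw) q r).of_norm_sub_lt
    ((hu.mono hr).sub continuousOn_const) continuousOn_const fun t ht => ?_
  rw [sub_sub_sub_cancel_right, ← dist_eq_norm]
  exact hnear ht

theorem eventually_hasWinding_sub_of_tendsto_cocompact (hE : IsEnd L q R)
    (hu : ContinuousOn u twicePuncturedPlane) (hinf : Tendsto u L (cocompact ℂ)) {p : ℤ}
    (hp : ∀ᶠ r in R, HasWinding u q r p) (w : ℂ) :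
    ∀ᶠ r in R, HasWinding (fun t => u t - w) q r p := by
  filter_upwards [hE.eventually_sphere_subset _ hE.mem, hE.eventually_sphere_subset _
    (hinf.eventually (isCompact_closedBall (0 : ℂ) ‖w‖).compl_mem_cocompact), hp] with r hr hfar hpr
  refine hpr.of_norm_sub_lt ((hu.mono hr).sub continuousOn_const) (hu.mono hr) fun t ht => ?_
  rw [sub_sub_cancel_left, norm_neg]
  simpa using hfar ht

end IsEnd

theorem exists_sub_eq_zpow_mul_exp_of_injOn {U : Set ℂ} (hU : Convex ℝ U) (hUo : IsOpen U)
    {u : ℂ → ℂ} (hu : ContinuousOn u U) (hinj : InjOn u U) {t : ℂ} (ht : t ∈ U) :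
    ∃ (n : ℤ) (g : ℂ → ℂ), ContinuousOn g (U \ {t}) ∧
      ∀ x ∈ U \ {t}, u x - u t = (x - t) ^ n * Complex.exp (g x) := by
  obtain ⟨n, g, hg, hn⟩ := exists_prod_zpow_mul_exp hU hUo {t} (by simpa using ht)
    (F := fun x => u x - u t) ((hu.mono sdiff_subset).sub continuousOn_const) fun x hx hxt =>
      hx.2 (by simpa using hinj hx.1 ht (sub_eq_zero.1 hxt))
  exact ⟨n t, g, by simpa using hg, by simpa using hn⟩

theorem exists_index_of_injOn {u : ℂ → ℂ} {s : ℂ} {r₀ : ℝ} (hr₀ : 0 < r₀)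
    (hu : ContinuousOn u (ball s r₀)) (hinj : InjOn u (ball s r₀)) :
    ∃ n : ℤ, (∀ r ∈ Ioo 0 r₀, HasWinding (fun x => u x - u s) s r n) ∧
      ∀ᶠ t in 𝓝 s, ∀ᶠ r in 𝓝[>] (0 : ℝ), HasWinding (fun x => u x - u t) t r n := by
  obtain ⟨n, g, hg, hn⟩ := exists_sub_eq_zpow_mul_exp_of_injOn (convex_ball s r₀) isOpen_ball hu
    hinj (mem_ball_self hr₀)
  have hsphere : ∀ r ∈ Ioo 0 r₀, sphere s r ⊆ ball s r₀ \ {s} := fun r hr t ht =>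
    ⟨sphere_subset_ball hr.2 ht, ne_of_mem_sphere ht hr.1.ne'⟩
  have hwind : ∀ r ∈ Ioo 0 r₀, HasWinding (fun x => u x - u s) s r n := fun r hr =>
    ⟨g, hg.mono (hsphere r hr), fun t ht => hn t (hsphere r hr ht)⟩
  refine ⟨n, hwind, ?_⟩
  obtain ⟨r, hr⟩ := exists_between hr₀
  have hur : ContinuousOn u (sphere s r) := hu.mono fun t ht => (hsphere r hr ht).1
  obtain ⟨x₀, hx₀, hmin⟩ := (isCompact_sphere s r).exists_isMinOn
    (NormedSpace.sphere_nonempty.2 hr.1.le) (f := fun x => ‖u x - u s‖)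
    (hur.sub continuousOn_const).norm
  have hδ : 0 < ‖u x₀ - u s‖ := norm_pos_iff.2 (sub_ne_zero.2 fun h =>
    (hsphere r hr hx₀).2 (hinj (hsphere r hr hx₀).1 (mem_ball_self hr₀) h))
  filter_upwards [ball_mem_nhds s hr.1,
    (hu.continuousAt (ball_mem_nhds s hr₀)).eventually (ball_mem_nhds _ hδ)] with t ht htu
  have ht₀ : t ∈ ball s r₀ := ball_subset_ball hr.2.le ht
  obtain ⟨m, f, hf, hm⟩ := exists_sub_eq_zpow_mul_exp_of_injOn (convex_ball s r₀) isOpen_ball hu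
    hinj ht₀
  have hwind_n : HasWinding (fun x => u x - u t) s r n := by
    refine (hwind r hr).of_norm_sub_lt (hur.sub continuousOn_const) (hur.sub continuousOn_const)
      fun x hx => lt_of_lt_of_le ?_ (isMinOn_iff.1 hmin x hx)
    rw [sub_sub_sub_cancel_left, norm_sub_rev, ← dist_eq_norm]
    exact htu
  have hts : ‖t - s‖ < r := mem_ball_iff_norm.1 ht
  have hwind_m : HasWinding (fun x => u x - u t) s r m := by
    have hsub : sphere s r ⊆ ball s r₀ \ {t} := fun x hx => ⟨(hsphere r hr hx).1, fun hxt =>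
      hts.ne (hxt ▸ mem_sphere_iff_norm.1 hx)⟩
    have := HasWinding.of_prod_zpow_mul_exp (F := fun x => u x - u t) hr.1 {t} (fun _ => m)
      (by simpa using hts.ne) (by simpa using hf.mono hsub)
      (by simpa using fun x hx => hm x (hsub (by simpa using hx)))
    rwa [Finset.sum_filter, Finset.sum_singleton, if_pos hts] at this
  rw [hwind_n.unique hr.1 hwind_m]
  exact HasWinding.eventually_of_prod_zpow_mul_exp {t} (fun _ => m) (isOpen_ball.mem_nhds ht₀)
    (by simp) (by simpa using hf) (by simpa using hm)

theorem exists_isUnit_index {u σ : ℂ → ℂ} {s : ℂ} {W O : Set ℂ} (hW : W ∈ 𝓝 s)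
    (hu : ContinuousOn u W) (hO : O ∈ 𝓝 (u s)) (hσ : ContinuousOn σ O) (hright : RightInvOn σ u O)
    (hleft : ∀ᶠ t in 𝓝 s, σ (u t) = t) :
    ∃ n : ℤ, IsUnit n ∧
      ∀ᶠ t in 𝓝 s, ∀ᶠ r in 𝓝[>] (0 : ℝ), HasWinding (fun x => u x - u t) t r n := by
  obtain ⟨ρ, hρ, hρO⟩ := Metric.mem_nhds_iff.1 hO
  obtain ⟨k, f, hf, hσf⟩ := exists_zpow_mul_exp_of_punctured_ball (F := fun x => σ x - s) hρ
    ((hσ.mono fun x hx => hρO hx.1).sub continuousOn_const) fun x hx h =>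
      hx.2 (by rw [mem_singleton_iff, ← hright (hρO hx.1), sub_eq_zero.1 h])
  obtain ⟨r₀, hr₀, hball⟩ := Metric.eventually_nhds_iff_ball.1 ((hleft.and hW).and
    ((hu.continuousAt hW).eventually (ball_mem_nhds _ hρ)))
  have hinj : InjOn u (ball s r₀) := fun a ha b hb hab => by
    rw [← (hball a ha).1.1, ← (hball b hb).1.1, hab]
  have huc : ContinuousOn u (ball s r₀) := hu.mono fun t ht => (hball t ht).1.2
  obtain ⟨n, hn, hnear⟩ := exists_index_of_injOn hr₀ huc hinj
  refine ⟨n, IsUnit.of_mul_eq_one k ?_, hnear⟩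
  obtain ⟨r, hr⟩ := exists_between hr₀
  have hsphere : sphere s r ⊆ ball s r₀ := sphere_subset_ball hr.2
  have hmaps : MapsTo u (sphere s r) (ball (u s) ρ \ {u s}) := fun t ht =>
    ⟨(hball t (hsphere ht)).2, fun h =>
      ne_of_mem_sphere ht hr.1.ne' (hinj (hsphere ht) (mem_ball_self hr₀) h)⟩
  have hwind : HasWinding (fun t => (u t - u s) ^ k * Complex.exp (f (u t))) s r (n * k + 0) :=
    ((hn r hr).zpow k).mul hr.1 (HasWinding.exp (hf.comp (huc.mono hsphere) hmaps))
  rw [add_zero] at hwind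
  refine (hwind.congr fun t ht => ?_).unique hr.1 (HasWinding.sub_center s r)
  rw [← hσf _ (hmaps ht), (hball t (hsphere ht)).1.1]

/-! ### Counting the points of a generic fibre -/

theorem HasWinding.eventually_atTop_of_prod_zpow_mul_exp {F g : ℂ → ℂ} (P : Finset ℂ) (n : ℂ → ℤ)
    (p : ℂ) (hg : ContinuousOn g (univ \ P))
    (hF : ∀ t ∈ univ \ (P : Set ℂ), F t = (∏ q ∈ P, (t - q) ^ n q) * Complex.exp (g t)) :
    ∀ᶠ r in atTop, HasWinding F p r (∑ q ∈ P, n q) := by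
  have hinside : ∀ᶠ r in (atTop : Filter ℝ), ∀ q ∈ P, ‖q - p‖ < r :=
    (Filter.eventually_all_finset P).2 fun q _ => eventually_gt_atTop _
  filter_upwards [hinside, eventually_gt_atTop 0] with r hr hr0
  have hsub : sphere p r ⊆ univ \ (P : Set ℂ) := fun t ht =>
    ⟨mem_univ t, fun htP => (hr t htP).ne (mem_sphere_iff_norm.1 ht)⟩
  simpa only [Finset.filter_true_of_mem hr] using
    of_prod_zpow_mul_exp hr0 P n (fun q hq => (hr q hq).ne) (hg.mono hsub)
      fun t ht => hF t (hsub ht)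

theorem sum_winding_eq {F : ℂ → ℂ} {P : Finset ℂ} (hF : ContinuousOn F (univ \ P))
    (hF0 : ∀ t ∈ univ \ (P : Set ℂ), F t ≠ 0) {k : ℂ → ℤ} {m : ℤ} {p : ℂ}
    (hk : ∀ q ∈ P, ∀ᶠ r in 𝓝[>] (0 : ℝ), HasWinding F q r (k q))
    (hm : ∀ᶠ r in atTop, HasWinding F p r m) : ∑ q ∈ P, k q = m := by
  obtain ⟨n, g, hg, hn⟩ :=
    exists_prod_zpow_mul_exp convex_univ isOpen_univ P (subset_univ _) hF hF0
  have hlocal : ∀ q ∈ P, k q = n q := fun q hq => by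
    obtain ⟨r, ⟨hkr, hnr⟩, hr⟩ := (((hk q hq).and
      (HasWinding.eventually_of_prod_zpow_mul_exp P n univ_mem hq hg hn)).and
        self_mem_nhdsWithin).exists
    exact hkr.unique hr hnr
  obtain ⟨r, ⟨hmr, hnr⟩, hr⟩ := ((hm.and
    (HasWinding.eventually_atTop_of_prod_zpow_mul_exp P n p hg hn)).and
      (eventually_gt_atTop 0)).exists
  rw [Finset.sum_congr rfl hlocal, hnr.unique hr hmr]

namespace IsCurveParam

variable {u v : ℂ → ℂ} {θ : ℂ × ℂ → ℂ} {Q : ℂ[X][Y]} {N : ℕ}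

theorem exists_local_index (h : IsCurveParam u v θ Q N) {s : ℂ} (hs : s ∈ twicePuncturedPlane)
    (hw : IsGenericValue Q (u s)) :
    ∃ n : ℤ, IsUnit n ∧
      ∀ᶠ t in 𝓝 s, ∀ᶠ r in 𝓝[>] (0 : ℝ), HasWinding (fun x => u x - u t) t r n := by
  obtain ⟨σ, -, ⟨O, hO, hσ, hright⟩, hleft⟩ := h.exists_local_section hs hw
  exact exists_isUnit_index (isOpen_twicePuncturedPlane.mem_nhds hs) h.continuousOn_fst hO hσ
    (fun x hx => (hright x hx).2) hleft

theorem exists_index (h : IsCurveParam u v θ Q N) {B : Finset ℂ}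
    (hB : ∀ w ∉ B, IsGenericValue Q w) :
    ∃ ε : ℤ, IsUnit ε ∧ ∀ s ∈ twicePuncturedPlane, u s ∉ B →
      ∀ᶠ r in 𝓝[>] (0 : ℝ), HasWinding (fun x => u x - u s) s r ε := by
  let T : Set ℂ := {t ∈ twicePuncturedPlane | u t ∈ B}
  have hT : T.Finite := by
    refine (B.finite_toSet.biUnion fun b _ => h.finite_fiber b).subset fun t ht => ?_
    simpa using (show t ∈ twicePuncturedPlane ∧ u t ∈ B from ht)
  have hindex : ∀ s ∈ twicePuncturedPlane \ T, ∃ n : ℤ, IsUnit n ∧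
      ∀ᶠ t in 𝓝 s, ∀ᶠ r in 𝓝[>] (0 : ℝ), HasWinding (fun x => u x - u t) t r n := fun s hs =>
    h.exists_local_index hs.1 (hB _ fun hsB => hs.2 ⟨hs.1, hsB⟩)
  choose! n hunit hn using hindex
  have hcont : ContinuousOn n (twicePuncturedPlane \ T) := by
    intro s hs
    refine tendsto_nhds_of_eventually_eq ?_
    filter_upwards [self_mem_nhdsWithin, nhdsWithin_le_nhds (hn s hs)] with t ht htn
    obtain ⟨r, ⟨hnear, hself⟩, hr⟩ :=
      ((htn.and (hn t ht).self_of_nhds).and self_mem_nhdsWithin).exists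
    exact hself.unique hr hnear
  obtain ⟨s₀, hs₀⟩ := (infinite_twicePuncturedPlane.sdiff hT).nonempty
  refine ⟨n s₀, hunit s₀ hs₀, fun s hs hsB => ?_⟩
  have hsT : s ∈ twicePuncturedPlane \ T := ⟨hs, fun h => hsB h.2⟩
  rw [(isPreconnected_twicePuncturedPlane_diff hT).constant hcont hs₀ hsT]
  exact (hn s hsT).self_of_nhds

theorem mem_of_mapClusterPt (h : IsCurveParam u v θ Q N) {B : Finset ℂ}
    (hB : ∀ w ∉ B, IsGenericValue Q w) {L : Filter ℂ} {q : ℂ} {R : Filter ℝ}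
    (hE : IsEnd L q R) {b : ℂ} (hb : MapClusterPt b L u) : b ∈ B := by
  by_contra hbB
  obtain ⟨O, hO, K, hK, hKS, hOK⟩ := h.exists_compact_preimage (hB b hbB)
  obtain ⟨t, htO, htS, htK⟩ := ((hb.frequently hO).and_eventually
    (inter_mem hE.mem (hE.compl_mem K hK hKS))).exists
  exact htK (hOK t htS htO)

theorem exists_end_winding (h : IsCurveParam u v θ Q N) {B : Finset ℂ}
    (hB : ∀ w ∉ B, IsGenericValue Q w) {L : Filter ℂ} {q : ℂ} {R : Filter ℝ} (hE : IsEnd L q R)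
    {p : ℤ} (hp : ∀ᶠ r in R, HasWinding u q r p) :
    ∃ k : ℤ, (k = 0 ∨ k = p) ∧ ∀ w ∉ B, ∀ᶠ r in R, HasWinding (fun t => u t - w) q r k := by
  rcases exists_tendsto_nhds_or_tendsto_cocompact hE.exists_isPreconnected hE.mem
    h.continuousOn_fst (B.finite_toSet.subset fun b => h.mem_of_mapClusterPt hB hE)
    with ⟨b, hb, hlim⟩ | hlim
  · have hbB := h.mem_of_mapClusterPt hB hE hb
    exact ⟨0, Or.inl rfl, fun w hw => hE.eventually_hasWinding_sub_of_tendsto_nhds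
      h.continuousOn_fst hlim (ne_of_mem_of_not_mem hbB hw)⟩
  · exact ⟨p, Or.inr rfl, fun w _ =>
      hE.eventually_hasWinding_sub_of_tendsto_cocompact h.continuousOn_fst hlim hp w⟩

theorem exists_end_windings (h : IsCurveParam u v θ Q N) {B : Finset ℂ}
    (hB : ∀ w ∉ B, IsGenericValue Q w) {p : ℤ} {a : ℂ → ℂ}
    (ha : ContinuousOn a twicePuncturedPlane)
    (hu : ∀ t ∈ twicePuncturedPlane, u t = t ^ p * Complex.exp (a t)) :
    ∃ k₀ k₂ : ℤ, (k₀ = 0 ∨ k₀ = p) ∧ (k₂ = 0 ∨ k₂ = p) ∧ ∀ w ∉ B,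
      (∀ᶠ r in 𝓝[>] (0 : ℝ), HasWinding (fun t => u t - w) 0 r k₀) ∧
      (∀ᶠ r in 𝓝[>] (0 : ℝ), HasWinding (fun t => u t - w) 1 r 0) ∧
      ∀ᶠ r in atTop, HasWinding (fun t => u t - w) 0 r k₂ := by
  have hprod : ∀ t ∈ univ \ (({0, 1} : Finset ℂ) : Set ℂ), u t =
      (∏ q ∈ {0, 1}, (t - q) ^ (if q = 0 then p else 0)) * Complex.exp (a t) := fun t ht => by
    simpa [prod_zero_one_sub_zpow] using hu t (twicePuncturedPlane_eq_univ_diff ▸ ht)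
  rw [twicePuncturedPlane_eq_univ_diff] at ha
  have hwind : ∀ q ∈ ({0, 1} : Finset ℂ), ∀ᶠ r in 𝓝[>] (0 : ℝ),
      HasWinding u q r (if q = 0 then p else 0) := fun q hq =>
    HasWinding.eventually_of_prod_zpow_mul_exp _ _ univ_mem hq ha hprod
  have hwind_top : ∀ᶠ r in atTop, HasWinding u 0 r p := by
    simpa using HasWinding.eventually_atTop_of_prod_zpow_mul_exp _ _ 0 ha hprod
  obtain ⟨k₀, hk₀, hzero⟩ := h.exists_end_winding hB (isEnd_nhdsNE fun h0 => h0.1 rfl)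
    (by simpa using hwind 0 (by simp))
  obtain ⟨k₁, hk₁, hone⟩ := h.exists_end_winding hB (isEnd_nhdsNE fun h1 => h1.2 rfl)
    (by simpa using hwind 1 (by simp))
  obtain ⟨k₂, hk₂, htop⟩ := h.exists_end_winding hB isEnd_cocompact hwind_top
  rw [or_self] at hk₁
  exact ⟨k₀, k₂, hk₀, hk₂, fun w hw => ⟨hzero w hw, hk₁ ▸ hone w hw, htop w hw⟩⟩

theorem exists_ncard_fiber (h : IsCurveParam u v θ Q N) {B : Finset ℂ}
    (hB : ∀ w ∉ B, IsGenericValue Q w) {p : ℤ} {a : ℂ → ℂ}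
    (ha : ContinuousOn a twicePuncturedPlane)
    (hu : ∀ t ∈ twicePuncturedPlane, u t = t ^ p * Complex.exp (a t)) :
    ∃ k : ℤ, (k = 0 ∨ k = p ∨ k = -p) ∧
      ∀ w ∉ B, ({t ∈ twicePuncturedPlane | u t = w}.ncard : ℤ) = k := by
  classical
  obtain ⟨ε, hε, hindex⟩ := h.exists_index hB
  obtain ⟨k₀, k₂, hk₀, hk₂, hends⟩ := h.exists_end_windings hB ha hu
  refine ⟨ε * (k₂ - k₀), ?_, fun w hw => ?_⟩
  · rcases Int.isUnit_iff.1 hε with rfl | rfl <;> rcases hk₀ with rfl | rfl <;>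
      rcases hk₂ with rfl | rfl <;> simp
  set T := (h.finite_fiber w).toFinset with hT
  have hTmem : ∀ t ∈ T, t ∈ twicePuncturedPlane ∧ u t = w := fun t ht => by simpa [hT] using ht
  have hmem : ∀ t ∈ univ \ ((insert 0 (insert 1 T) : Finset ℂ) : Set ℂ),
      t ∈ twicePuncturedPlane ∧ t ∉ T := fun t ht => by
    simpa [twicePuncturedPlane, not_or, and_assoc] using ht.2
  have hsum := sum_winding_eq (P := insert 0 (insert 1 T)) (F := fun t => u t - w)
    (k := fun q => if q = 0 then k₀ else if q = 1 then 0 else ε)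
    ((h.continuousOn_fst.mono fun t ht => (hmem t ht).1).sub continuousOn_const)
    (fun t ht h0 => (hmem t ht).2 (by simpa [hT, sub_eq_zero.1 h0] using (hmem t ht).1))
    (fun q hq => ?_) (hends w hw).2.2
  · have h0T : 0 ∉ insert 1 T := by simpa using fun h0 => (hTmem 0 h0).1.1 rfl
    have h1T : 1 ∉ T := fun h1 => (hTmem 1 h1).1.2 rfl
    have hconst : ∑ q ∈ T, (if q = 0 then k₀ else if q = 1 then 0 else ε) = T.card * ε := by
      rw [← nsmul_eq_mul, ← Finset.sum_const]
      exact Finset.sum_congr rfl fun q hq => by simp [(hTmem q hq).1.1, (hTmem q hq).1.2]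
    rw [Finset.sum_insert h0T, Finset.sum_insert h1T, hconst, if_pos rfl, if_neg one_ne_zero,
      if_pos rfl, zero_add] at hsum
    rw [Set.ncard_eq_toFinset_card _ (h.finite_fiber w), ← hsum, add_sub_cancel_left,
      mul_left_comm, Int.isUnit_mul_self hε, mul_one]
  · rcases Finset.mem_insert.1 hq with rfl | hq
    · simpa using (hends w hw).1
    rcases Finset.mem_insert.1 hq with rfl | hq
    · simpa using (hends w hw).2.1
    obtain ⟨hqS, rfl⟩ := hTmem q hq
    simpa [hqS.1, hqS.2] using hindex q hqS hw

theorem exists_fst_notMem (h : IsCurveParam u v θ Q N) (B : Finset ℂ) :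
    ∃ t ∈ twicePuncturedPlane, u t ∉ B := by
  obtain ⟨t, ht, htT⟩ := (infinite_twicePuncturedPlane.sdiff
    (B.finite_toSet.biUnion fun b _ => h.finite_fiber b)).nonempty
  refine ⟨t, ht, fun htB => htT ?_⟩
  simpa using (⟨ht, htB⟩ : t ∈ twicePuncturedPlane ∧ u t ∈ B)

theorem exists_ncard_fiber_eq (h : IsCurveParam u v θ Q N) {B : Finset ℂ}
    (hB : ∀ w ∉ B, IsGenericValue Q w) {p : ℤ} {a : ℂ → ℂ}
    (ha : ContinuousOn a twicePuncturedPlane)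
    (hu : ∀ t ∈ twicePuncturedPlane, u t = t ^ p * Complex.exp (a t)) :
    p ≠ 0 ∧ ∀ w ∉ B, {t ∈ twicePuncturedPlane | u t = w}.ncard = p.natAbs := by
  obtain ⟨k, hk, hcard⟩ := h.exists_ncard_fiber hB ha hu
  obtain ⟨t, ht, htB⟩ := h.exists_fst_notMem B
  have hpos : 0 < {s ∈ twicePuncturedPlane | u s = u t}.ncard :=
    (Set.ncard_pos (h.finite_fiber _)).2 ⟨t, ht, rfl⟩
  have hkt := hcard _ htB
  exact ⟨by omega, fun w hw => by have := hcard w hw; omega⟩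

theorem false_of_fst_eq_exp (h : IsCurveParam u v θ Q N) {a : ℂ → ℂ}
    (ha : ContinuousOn a twicePuncturedPlane)
    (hu : ∀ t ∈ twicePuncturedPlane, u t = Complex.exp (a t)) : False := by
  obtain ⟨B, -, hB⟩ := exists_finset_isGenericValue h.coeff_zero_ne_zero
  exact (h.exists_ncard_fiber_eq hB (p := 0) ha (by simpa using hu)).1 rfl

theorem existsUnique_preimage (h : IsCurveParam u v θ Q N) {a : ℂ → ℂ}
    (ha : ContinuousOn a twicePuncturedPlane)
    (hu : ∀ t ∈ twicePuncturedPlane, u t = t * Complex.exp (a t)) {B : Finset ℂ}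
    (hB : ∀ w ∉ B, IsGenericValue Q w) {w : ℂ} (hw : w ∉ B) :
    ∃! t, t ∈ twicePuncturedPlane ∧ u t = w := by
  obtain ⟨t, ht⟩ := Set.ncard_eq_one.1
    ((h.exists_ncard_fiber_eq hB (p := 1) ha (by simpa using hu)).2 w hw)
  exact ⟨t, ht.symm.subset rfl, fun s hs => ht.subset hs⟩

end IsCurveParam

/-! ### Rationality of the second coordinate -/

theorem exists_norm_eval_le_eval_norm {R : Type*} [NormedRing R] [NormOneClass R] (p : R[X]) :
    ∃ q : ℝ[X], ∀ z, ‖p.eval z‖ ≤ q.eval ‖z‖ := by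
  refine ⟨∑ i ∈ Finset.range (p.natDegree + 1), C ‖p.coeff i‖ * X ^ i, fun z => ?_⟩
  rw [Polynomial.eval_eq_sum_range, Polynomial.eval_finsetSum]
  refine norm_sum_le_of_le _ fun i _ => ?_
  rw [Polynomial.eval_mul, Polynomial.eval_C, Polynomial.eval_pow, Polynomial.eval_X]
  exact (norm_mul_le _ _).trans (mul_le_mul_of_nonneg_left (norm_pow_le _ _) (norm_nonneg _))

theorem iteratedDeriv_zero_eq_zero_of_norm_le {f : ℂ → ℂ} (hf : Differentiable ℂ f) {q : ℝ[X]}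
    (hq : ∀ z, ‖f z‖ ≤ q.eval ‖z‖) {m : ℕ} (hm : q.natDegree < m) : iteratedDeriv m f 0 = 0 := by
  have hdeg : q.degree < (X ^ m : ℝ[X]).degree := by
    rw [Polynomial.degree_X_pow]
    exact Polynomial.degree_le_natDegree.trans_lt (by exact_mod_cast hm)
  have hlim : Tendsto (fun R : ℝ => m.factorial * (q.eval R / R ^ m)) atTop (𝓝 0) := by
    simpa using (Polynomial.div_tendsto_atTop_zero_of_degree_lt q (X ^ m) hdeg).const_mul
      (m.factorial : ℝ)
  refine norm_le_zero_iff.1 (ge_of_tendsto hlim ?_)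
  filter_upwards [eventually_gt_atTop 0] with R hR
  rw [← mul_div_assoc]
  refine Complex.norm_iteratedDeriv_le_of_forall_mem_sphere_norm_le m hR hf.diffContOnCl
    fun z hz => ?_
  rw [← mem_sphere_zero_iff_norm.1 hz]
  exact hq z

theorem exists_polynomial_eq_of_norm_le {f : ℂ → ℂ} (hf : Differentiable ℂ f) {q : ℝ[X]}
    (hq : ∀ z, ‖f z‖ ≤ q.eval ‖z‖) : ∃ p : ℂ[X], ∀ z, f z = p.eval z := by
  refine ⟨∑ i ∈ Finset.range (q.natDegree + 1),
    C ((i.factorial : ℂ)⁻¹ * iteratedDeriv i f 0) * X ^ i, fun z => ?_⟩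
  rw [← Complex.taylorSeries_eq_of_entire' 0 z hf, Polynomial.eval_finsetSum,
    tsum_eq_sum (s := Finset.range (q.natDegree + 1)) fun i hi => by
      rw [iteratedDeriv_zero_eq_zero_of_norm_le hf hq (by simpa using hi), mul_zero, zero_mul]]
  simp only [sub_zero, Polynomial.eval_mul, Polynomial.eval_C, Polynomial.eval_pow,
    Polynomial.eval_X]

theorem exists_differentiable_eq_of_norm_le {B : Set ℂ} (hB : B.Finite) {F : ℂ → ℂ} {K : ℂ → ℝ}
    (hK : Continuous K) (hF : ∀ w ∉ B, DifferentiableAt ℂ F w) (hFK : ∀ w ∉ B, ‖F w‖ ≤ K w) :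
    ∃ G : ℂ → ℂ, Differentiable ℂ G ∧ ∀ w ∉ B, F w = G w := by
  classical
  let G : ℂ → ℂ := fun w => if w ∈ B then limUnder (𝓝[≠] w) F else F w
  have hG : ∀ w ∉ B, G w = F w := fun w hw => if_neg hw
  refine ⟨G, fun w => ?_, fun w hw => (hG w hw).symm⟩
  by_cases hw : w ∈ B
  · obtain ⟨ε, hε, hball⟩ := nhds_basis_closedBall.mem_iff.1
      ((hB.subset sdiff_subset).isClosed.isOpen_compl.mem_nhds (by simp : w ∈ (B \ {w})ᶜ))
    have hsub : ∀ z ∈ closedBall w ε \ {w}, z ∉ B := fun z hz hzB => hball hz.1 ⟨hzB, hz.2⟩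
    obtain ⟨M, hM⟩ := (isCompact_closedBall w ε).bddAbove_image hK.continuousOn
    have hbdd : BddAbove (norm ∘ F '' (closedBall w ε \ {w})) := by
      refine ⟨M, ?_⟩
      rintro _ ⟨z, hz, rfl⟩
      exact (hFK z (hsub z hz)).trans (hM ⟨z, hz.1, rfl⟩)
    have hnhds := closedBall_mem_nhds w hε
    refine ((Complex.differentiableOn_update_limUnder_of_bddAbove hnhds
      (fun z hz => (hF z (hsub z hz)).differentiableWithinAt) hbdd).differentiableAt
        hnhds).congr_of_eventuallyEq ?_
    filter_upwards [hnhds] with z hz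
    rcases eq_or_ne z w with rfl | hzw
    · rw [Function.update_self, show G z = _ from if_pos hw]
    · rw [Function.update_of_ne hzw, hG z (hsub z ⟨hz, hzw⟩)]
  · refine (hF w hw).congr_of_eventuallyEq ?_
    filter_upwards [hB.isClosed.isOpen_compl.mem_nhds hw] using hG

theorem exists_polynomial_eq_of_norm_le_of_finite {B : Set ℂ} (hB : B.Finite) {F : ℂ → ℂ}
    (hF : ∀ w ∉ B, DifferentiableAt ℂ F w) {q : ℝ[X]} (hq : ∀ w ∉ B, ‖F w‖ ≤ q.eval ‖w‖) :
    ∃ p : ℂ[X], ∀ w ∉ B, F w = p.eval w := by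
  have hK : Continuous fun w : ℂ => q.eval ‖w‖ := by fun_prop
  obtain ⟨G, hG, hFG⟩ := exists_differentiable_eq_of_norm_le hB hK hF hq
  have hclosed : IsClosed {w | ‖G w‖ ≤ q.eval ‖w‖} := isClosed_le hG.continuous.norm hK
  have hsub : univ \ B ⊆ {w | ‖G w‖ ≤ q.eval ‖w‖} := fun z hz =>
    (congrArg norm (hFG z hz.2)).symm.trans_le (hq z hz.2)
  have hGq : ∀ w, ‖G w‖ ≤ q.eval ‖w‖ := fun w =>
    hclosed.closure_subset_iff.2 hsub (dense_univ.sdiff_finite hB w)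
  obtain ⟨p, hp⟩ := exists_polynomial_eq_of_norm_le hG hGq
  exact ⟨p, fun w hw => (hFG w hw).trans (hp w)⟩

namespace IsCurveParam

variable {u v : ℂ → ℂ} {θ : ℂ × ℂ → ℂ} {Q : ℂ[X][Y]} {N : ℕ}

theorem exists_section (h : IsCurveParam u v θ Q N) {B : Finset ℂ}
    (hB : ∀ w ∉ B, IsGenericValue Q w)
    (huniq : ∀ w ∉ B, ∃! t, t ∈ twicePuncturedPlane ∧ u t = w) :
    ∃ ψ : ℂ → ℂ, ContinuousOn ψ (univ \ B) ∧ MapsTo ψ (univ \ B) twicePuncturedPlane ∧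
      (∀ w ∈ univ \ (B : Set ℂ), u (ψ w) = w) ∧
      ∀ t ∈ twicePuncturedPlane, u t ∉ B → ψ (u t) = t := by
  have hex : ∀ w ∈ univ \ (B : Set ℂ), ∃ t, t ∈ twicePuncturedPlane ∧ u t = w :=
    fun w hw => (huniq w hw.2).exists
  choose! ψ hψS huψ using hex
  have hψu : ∀ t ∈ twicePuncturedPlane, u t ∉ B → ψ (u t) = t := fun t ht hB =>
    (huniq _ hB).unique ⟨hψS _ ⟨mem_univ _, hB⟩, huψ _ ⟨mem_univ _, hB⟩⟩ ⟨ht, rfl⟩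
  refine ⟨ψ, fun w hw => ?_, hψS, huψ, hψu⟩
  obtain ⟨σ, -, ⟨O, hO, hσ, hσO⟩, -⟩ :=
    h.exists_local_section (hψS w hw) ((huψ w hw).symm ▸ hB w hw.2)
  rw [huψ w hw] at hO
  refine ((hσ.continuousAt hO).congr ?_).continuousWithinAt
  filter_upwards [hO, B.finite_toSet.isClosed.isOpen_compl.mem_nhds hw.2] with z hz hzB
  have hψz := hψu (σ z) (hσO z hz).1 (by rwa [(hσO z hz).2])
  rwa [(hσO z hz).2, eq_comm] at hψz

section Section

variable {B : Finset ℂ} {ψ : ℂ → ℂ}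

theorem evalEval_snd_section (h : IsCurveParam u v θ Q N)
    (hψS : MapsTo ψ (univ \ B) twicePuncturedPlane) (huψ : ∀ w ∈ univ \ (B : Set ℂ), u (ψ w) = w)
    {w : ℂ} (hw : w ∈ univ \ (B : Set ℂ)) : Q.evalEval w (v (ψ w)) = 0 := by
  simpa [huψ w hw] using h.evalEval_eq_zero (hψS hw)

theorem differentiableAt_snd_section (h : IsCurveParam u v θ Q N)
    (hB : ∀ w ∉ B, IsGenericValue Q w) (hψ : ContinuousOn ψ (univ \ B))
    (hψS : MapsTo ψ (univ \ B) twicePuncturedPlane) (huψ : ∀ w ∈ univ \ (B : Set ℂ), u (ψ w) = w)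
    {w : ℂ} (hw : w ∈ univ \ (B : Set ℂ)) : DifferentiableAt ℂ (fun z => v (ψ z)) w := by
  have hzero : ∀ z ∈ univ \ (B : Set ℂ), Q.evalEval z (v (ψ z)) = 0 :=
    fun z => h.evalEval_snd_section hψS huψ
  obtain ⟨ω, hω, -, -, -, huniq⟩ := (hB w hw.2).exists_branch _ (hzero w hw)
  have hnhds := (isOpen_univ.sdiff B.finite_toSet.isClosed).mem_nhds hw
  have hcont : ContinuousAt (fun z => v (ψ z)) w :=
    ContinuousAt.comp (g := v) (h.continuousAt_snd (hψS hw)) (hψ.continuousAt hnhds)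
  refine hω.congr_of_eventuallyEq ?_
  filter_upwards [(continuousAt_id.prodMk hcont).eventually huniq, hnhds] with z hz hzB
  exact (hz (hzero z hzB)).symm

theorem exists_leadingCoeff_mul_snd_section_eq (h : IsCurveParam u v θ Q N)
    (hB : ∀ w ∉ B, IsGenericValue Q w) (hψ : ContinuousOn ψ (univ \ B))
    (hψS : MapsTo ψ (univ \ B) twicePuncturedPlane)
    (huψ : ∀ w ∈ univ \ (B : Set ℂ), u (ψ w) = w) :
    ∃ H : ℂ[X], ∀ w ∉ B, Q.leadingCoeff.eval w * v (ψ w) = H.eval w := by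
  choose q hq using fun i => exists_norm_eval_le_eval_norm (Q.coeff i)
  refine exists_polynomial_eq_of_norm_le_of_finite B.finite_toSet
    (q := ∑ i ∈ Finset.range (Q.natDegree + 1), q i) (fun w hw => ?_) fun w hw => ?_
  · exact (Polynomial.differentiableAt _).mul
      (h.differentiableAt_snd_section hB hψ hψS huψ ⟨mem_univ w, hw⟩)
  · rw [Polynomial.eval_finsetSum]
    exact (norm_eval_leadingCoeff_mul_le (hB w hw).leadingCoeff
      (h.evalEval_snd_section hψS huψ ⟨mem_univ w, hw⟩)).trans
        (Finset.sum_le_sum fun i _ => hq i w)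

theorem eqOn_of_fst_notMem (h : IsCurveParam u v θ Q N) (B : Finset ℂ) {f g : ℂ → ℂ}
    (hf : ContinuousOn f twicePuncturedPlane) (hg : ContinuousOn g twicePuncturedPlane)
    (hfg : ∀ t ∈ twicePuncturedPlane, u t ∉ B → f t = g t) : EqOn f g twicePuncturedPlane :=
  eqOn_of_eqOn_diff_finite isOpen_twicePuncturedPlane
    (B.finite_toSet.biUnion fun w _ => h.finite_fiber w) hf hg fun t ht =>
      hfg t ht.1 fun htB => ht.2 (mem_biUnion htB ⟨ht.1, rfl⟩)

theorem exists_isCoprime_mul_snd_eq (h : IsCurveParam u v θ Q N)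
    (hB : ∀ w ∉ B, IsGenericValue Q w) (hψ : ContinuousOn ψ (univ \ B))
    (hψS : MapsTo ψ (univ \ B) twicePuncturedPlane)
    (huψ : ∀ w ∈ univ \ (B : Set ℂ), u (ψ w) = w)
    (hψu : ∀ t ∈ twicePuncturedPlane, u t ∉ B → ψ (u t) = t) :
    ∃ L H : ℂ[X], IsCoprime L H ∧
      ∀ t ∈ twicePuncturedPlane, L.eval (u t) * v t = H.eval (u t) := by
  classical
  obtain ⟨H, hH⟩ := h.exists_leadingCoeff_mul_snd_section_eq hB hψ hψS huψ
  have hQ : Q.leadingCoeff ≠ 0 :=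
    Polynomial.leadingCoeff_ne_zero.2 fun h0 => h.coeff_zero_ne_zero (by simp [h0])
  obtain ⟨L₁, H₁, hL₁, hH₁, hunit⟩ := extract_gcd Q.leadingCoeff H
  set d := gcd Q.leadingCoeff H
  have hd : d ≠ 0 := fun h0 => hQ (by rw [hL₁, h0, zero_mul])
  refine ⟨L₁, H₁, (gcd_isUnit_iff L₁ H₁).1 hunit, h.eqOn_of_fst_notMem (B ∪ d.roots.toFinset)
    ((L₁.continuous.comp_continuousOn h.continuousOn_fst).mul h.continuousOn_snd)
    (H₁.continuous.comp_continuousOn h.continuousOn_fst) fun t ht htB => ?_⟩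
  rw [Finset.notMem_union, Multiset.mem_toFinset, Polynomial.mem_roots hd] at htB
  have hrel := hH (u t) htB.1
  rw [hψu t ht htB.1, hL₁, hH₁, Polynomial.eval_mul, Polynomial.eval_mul, mul_assoc] at hrel
  exact mul_left_cancel₀ htB.2 hrel

end Section

theorem fst_ne_of_isCoprime (h : IsCurveParam u v θ Q N) {L H : ℂ[X]} (hLH : IsCoprime L H)
    (hrel : ∀ t ∈ twicePuncturedPlane, L.eval (u t) * v t = H.eval (u t)) {w : ℂ}
    (hw : L.eval w = 0 ∨ H.eval w = 0) {t : ℂ} (ht : t ∈ twicePuncturedPlane) : u t ≠ w := by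
  rintro rfl
  have hboth : L.eval (u t) = 0 ∧ H.eval (u t) = 0 := by
    rcases hw with hL | hH
    · exact ⟨hL, by rw [← hrel t ht, hL, zero_mul]⟩
    · exact ⟨(mul_eq_zero.1 ((hrel t ht).trans hH)).resolve_right (h.snd_ne_zero ht), hH⟩
  obtain ⟨p, q, hpq⟩ := hLH
  simpa [hboth.1, hboth.2] using congrArg (Polynomial.eval (u t)) hpq

end IsCurveParam

/-! ### Omitted values -/

theorem prod_zpow_eq_zpow_sum {ι G₀ : Type*} [CommGroupWithZero G₀] {a : G₀} (ha : a ≠ 0)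
    (s : Finset ι) (n : ι → ℤ) : ∏ i ∈ s, a ^ n i = a ^ ∑ i ∈ s, n i := by
  classical
  induction s using Finset.induction_on with
  | empty => simp
  | insert i s hi ih => rw [Finset.prod_insert hi, Finset.sum_insert hi, zpow_add₀ ha, ih]

theorem exists_mem_forall_eq_or_eq {α : Type*} {s : Finset α} {a : α} (ha : a ∈ s)
    (hs : s.card ≤ 2) : ∃ b ∈ s, ∀ c ∈ s, c = a ∨ c = b := by
  classical
  have hone : (s.erase a).card ≤ 1 := by
    rw [Finset.card_erase_of_mem ha]
    omega
  by_cases hex : ∃ b ∈ s, b ≠ a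
  · obtain ⟨b, hb, hba⟩ := hex
    exact ⟨b, hb, fun c hc => or_iff_not_imp_left.2 fun hca => Finset.card_le_one.1 hone c
      (Finset.mem_erase.2 ⟨hca, hc⟩) b (Finset.mem_erase.2 ⟨hba, hb⟩)⟩
  · push Not at hex
    exact ⟨a, ha, fun c hc => Or.inl (hex c hc)⟩

theorem exists_prod_map_sub_eq {R : Type*} [CommRing R] (s : Multiset R) {a b : R}
    (hs : ∀ r ∈ s, r = a ∨ r = b) :
    ∃ i j : ℕ, ∀ w, (s.map (w - ·)).prod = (w - a) ^ i * (w - b) ^ j := by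
  induction s using Multiset.induction_on with
  | empty => exact ⟨0, 0, by simp⟩
  | cons r s ih =>
    obtain ⟨i, j, hij⟩ := ih fun x hx => hs x (Multiset.mem_cons_of_mem hx)
    rcases hs r (Multiset.mem_cons_self r s) with rfl | rfl
    · exact ⟨i + 1, j, fun w => by rw [Multiset.map_cons, Multiset.prod_cons, hij]; ring⟩
    · exact ⟨i, j + 1, fun w => by rw [Multiset.map_cons, Multiset.prod_cons, hij]; ring⟩

theorem exists_ne_zero_sum_mul_eq_zero {ι : Type*} {s : Finset ι} (hs : 2 < s.card) (m n : ι → ℤ) :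
    ∃ k : ι → ℤ, (∃ i ∈ s, k i ≠ 0) ∧ ∑ i ∈ s, k i * m i = 0 ∧ ∑ i ∈ s, k i * n i = 0 := by
  have hdep : ¬ LinearIndepOn ℤ (fun i => (m i, n i)) (s : Set ι) := fun hind => by
    have hcard := hind.fintype_card_le_finrank
    simp only [SetLike.coe_sort_coe, Fintype.card_coe, Module.finrank_prod,
      Module.finrank_self] at hcard
    omega
  rw [linearIndepOn_finset_iff] at hdep
  push Not at hdep
  obtain ⟨k, hk, hne⟩ := hdep
  refine ⟨k, hne, ?_, ?_⟩
  · simpa [Prod.fst_sum] using congrArg Prod.fst hk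
  · simpa [Prod.snd_sum] using congrArg Prod.snd hk

theorem exists_zpow_mul_zpow_mul_exp {F : ℂ → ℂ} (hF : ContinuousOn F twicePuncturedPlane)
    (h0 : ∀ t ∈ twicePuncturedPlane, F t ≠ 0) :
    ∃ (m n : ℤ) (g : ℂ → ℂ), ContinuousOn g twicePuncturedPlane ∧
      ∀ t ∈ twicePuncturedPlane, F t = t ^ m * (t - 1) ^ n * Complex.exp (g t) := by
  rw [twicePuncturedPlane_eq_univ_diff] at *
  obtain ⟨n, g, hg, h⟩ := exists_prod_zpow_mul_exp convex_univ isOpen_univ {0, 1}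
    (subset_univ _) hF h0
  exact ⟨n 0, n 1, g, hg, fun t ht => by rw [h t ht, prod_zero_one_sub_zpow]⟩

theorem exists_prod_zpow_eq_exp {ι : Type*} {s : Finset ι} (hs : 2 < s.card) {F : ι → ℂ → ℂ}
    (hF : ∀ i, ContinuousOn (F i) twicePuncturedPlane)
    (h0 : ∀ i ∈ s, ∀ t ∈ twicePuncturedPlane, F i t ≠ 0) :
    ∃ k : ι → ℤ, (∃ i ∈ s, k i ≠ 0) ∧ ∃ g : ℂ → ℂ, ContinuousOn g twicePuncturedPlane ∧
      ∀ t ∈ twicePuncturedPlane, ∏ i ∈ s, F i t ^ k i = Complex.exp (g t) := by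
  choose! m n f hf hmn using fun i hi => exists_zpow_mul_zpow_mul_exp (hF i) (h0 i hi)
  obtain ⟨k, hk, hm, hn⟩ := exists_ne_zero_sum_mul_eq_zero hs m n
  refine ⟨k, hk, fun t => ∑ i ∈ s, k i * f i t,
    continuousOn_finsetSum _ fun i hi => continuousOn_const.mul (hf i hi), fun t ht => ?_⟩
  calc ∏ i ∈ s, F i t ^ k i
      = ∏ i ∈ s, t ^ (k i * m i) * (t - 1) ^ (k i * n i) * Complex.exp (k i * f i t) :=
        Finset.prod_congr rfl fun i hi => by
          rw [hmn i hi t ht, mul_zpow, mul_zpow, ← zpow_mul', ← zpow_mul', Complex.exp_int_mul]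
    _ = t ^ (∑ i ∈ s, k i * m i) * (t - 1) ^ (∑ i ∈ s, k i * n i) *
          Complex.exp (∑ i ∈ s, k i * f i t) := by
        rw [Finset.prod_mul_distrib, Finset.prod_mul_distrib, prod_zpow_eq_zpow_sum ht.1,
          prod_zpow_eq_zpow_sum (sub_ne_zero.2 ht.2), Complex.exp_sum]
    _ = Complex.exp (∑ i ∈ s, k i * f i t) := by rw [hm, hn, zpow_zero, zpow_zero, one_mul, one_mul]

theorem false_of_eq_const_mul_zpow {u v a a' : ℂ → ℂ} (ha : ContinuousOn a twicePuncturedPlane)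
    (hu : ∀ t ∈ twicePuncturedPlane, u t = t * Complex.exp (a t))
    (ha' : ContinuousOn a' twicePuncturedPlane)
    (hv : ∀ t ∈ twicePuncturedPlane, v t = (t - 1) * Complex.exp (a' t)) {κ : ℂ} (hκ : κ ≠ 0)
    {m : ℤ} (huv : ∀ t ∈ twicePuncturedPlane, v t = κ * u t ^ m) : False := by
  refine false_of_eq_zpow_mul_exp (v := u) (m := 1) (n := m) (f := fun t => -a t)
    (g := fun t => Complex.log κ - a' t)
    (fun t ht => hu t ht ▸ mul_ne_zero ht.1 (Complex.exp_ne_zero _)) ha.neg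
    (continuousOn_const.sub ha') (fun t ht => ?_) fun t ht => ?_
  · rw [hu t ht, zpow_one, mul_assoc, ← Complex.exp_add, add_neg_cancel, Complex.exp_zero, mul_one]
  · rw [Complex.exp_sub, Complex.exp_log hκ, ← mul_div_assoc, mul_comm (u t ^ m), ← huv t ht,
      hv t ht, mul_div_cancel_right₀ _ (Complex.exp_ne_zero _)]

section Section

variable {u ψ : ℂ → ℂ} {B P : Finset ℂ}

theorem eq_zero_of_prod_sub_zpow_eq_exp (hψ : ContinuousOn ψ (univ \ B))
    (hψS : MapsTo ψ (univ \ B) twicePuncturedPlane) (huψ : ∀ w ∈ univ \ (B : Set ℂ), u (ψ w) = w)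
    {n : ℂ → ℤ} {g : ℂ → ℂ} (hg : ContinuousOn g twicePuncturedPlane)
    (h : ∀ t ∈ twicePuncturedPlane, ∏ q ∈ P, (u t - q) ^ n q = Complex.exp (g t)) :
    ∀ q ∈ P, n q = 0 := by
  classical
  have hsub : univ \ ((P ∪ B : Finset ℂ) : Set ℂ) ⊆ univ \ (B : Set ℂ) :=
    sdiff_subset_sdiff_right (Finset.coe_subset.2 Finset.subset_union_right)
  have hzero := eq_zero_of_prod_zpow_eq_exp (P := P ∪ B) (n := fun q => if q ∈ P then n q else 0)
    (hg.comp (hψ.mono hsub) (hψS.mono_left hsub)) fun w hw => by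
      rw [Function.comp_apply, ← h _ (hψS (hsub hw)), huψ w (hsub hw)]
      refine (Finset.prod_subset Finset.subset_union_left fun q _ hq => ?_).symm.trans
        (Finset.prod_congr rfl fun q hq => ?_)
      · rw [if_neg hq, zpow_zero]
      · rw [if_pos hq]
  exact fun q hq => by simpa [hq] using hzero q (Finset.mem_union_left _ hq)

theorem card_le_two_of_forall_ne (hu : ContinuousOn u twicePuncturedPlane)
    (hψ : ContinuousOn ψ (univ \ B)) (hψS : MapsTo ψ (univ \ B) twicePuncturedPlane)
    (huψ : ∀ w ∈ univ \ (B : Set ℂ), u (ψ w) = w)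
    (hP : ∀ q ∈ P, ∀ t ∈ twicePuncturedPlane, u t ≠ q) : P.card ≤ 2 := by
  by_contra! hcard
  obtain ⟨k, ⟨q, hq, hkq⟩, g, hg, hprod⟩ := exists_prod_zpow_eq_exp hcard
    (fun q => hu.sub (continuousOn_const (c := q))) fun q hq t ht => sub_ne_zero.2 (hP q hq t ht)
  exact hkq (eq_zero_of_prod_sub_zpow_eq_exp hψ hψS huψ hg hprod q hq)

end Section

namespace IsCurveParam

variable {u v : ℂ → ℂ} {θ : ℂ × ℂ → ℂ} {Q : ℂ[X][Y]} {N : ℕ}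

theorem exists_forall_roots_eq_or_eq (h : IsCurveParam u v θ Q N) {B : Finset ℂ} {ψ : ℂ → ℂ}
    (hψ : ContinuousOn ψ (univ \ B)) (hψS : MapsTo ψ (univ \ B) twicePuncturedPlane)
    (huψ : ∀ w ∈ univ \ (B : Set ℂ), u (ψ w) = w) {L H : ℂ[X]} (hLH : IsCoprime L H)
    (hrel : ∀ t ∈ twicePuncturedPlane, L.eval (u t) * v t = H.eval (u t)) :
    ∃ b, (∀ t ∈ twicePuncturedPlane, u t ≠ b) ∧
      (∀ r ∈ L.roots, r = 0 ∨ r = b) ∧ ∀ r ∈ H.roots, r = 0 ∨ r = b := by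
  classical
  let P : Finset ℂ := insert 0 (L.roots.toFinset ∪ H.roots.toFinset)
  have hP : ∀ q ∈ P, ∀ t ∈ twicePuncturedPlane, u t ≠ q := by
    intro q hq t ht
    simp only [P, Finset.mem_insert, Finset.mem_union, Multiset.mem_toFinset] at hq
    rcases hq with rfl | hq
    · exact h.fst_ne_zero ht
    · exact h.fst_ne_of_isCoprime hLH hrel
        (hq.imp Polynomial.isRoot_of_mem_roots Polynomial.isRoot_of_mem_roots) ht
  obtain ⟨b, hb, hPb⟩ := exists_mem_forall_eq_or_eq (Finset.mem_insert_self 0 _ : (0 : ℂ) ∈ P)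
    (card_le_two_of_forall_ne h.continuousOn_fst hψ hψS huψ hP)
  exact ⟨b, hP b hb, fun r hr => hPb r (by simp [Multiset.mem_toFinset.2 hr]),
    fun r hr => hPb r (by simp [Multiset.mem_toFinset.2 hr])⟩

theorem exists_snd_eq_mul_zpow (h : IsCurveParam u v θ Q N) {B : Finset ℂ} {ψ : ℂ → ℂ}
    (hψ : ContinuousOn ψ (univ \ B)) (hψS : MapsTo ψ (univ \ B) twicePuncturedPlane)
    (huψ : ∀ w ∈ univ \ (B : Set ℂ), u (ψ w) = w) {L H : ℂ[X]} (hLH : IsCoprime L H)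
    (hrel : ∀ t ∈ twicePuncturedPlane, L.eval (u t) * v t = H.eval (u t)) :
    ∃ (κ b : ℂ) (m k : ℤ), κ ≠ 0 ∧
      ∀ t ∈ twicePuncturedPlane, u t ≠ b ∧ v t = κ * (u t ^ m * (u t - b) ^ k) := by
  obtain ⟨b, hub, hLb, hHb⟩ := h.exists_forall_roots_eq_or_eq hψ hψS huψ hLH hrel
  obtain ⟨i, j, hij⟩ := exists_prod_map_sub_eq L.roots hLb
  obtain ⟨i', j', hij'⟩ := exists_prod_map_sub_eq H.roots hHb
  have hne : L ≠ 0 ∧ H ≠ 0 := by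
    obtain ⟨t, ht⟩ := infinite_twicePuncturedPlane.nonempty
    refine ⟨?_, ?_⟩ <;> rintro rfl <;>
      exact h.fst_ne_of_isCoprime hLH hrel (w := u t) (by simp) ht rfl
  have hL := Polynomial.leadingCoeff_ne_zero.2 hne.1
  refine ⟨H.leadingCoeff / L.leadingCoeff, b, i' - i, j' - j,
    div_ne_zero (Polynomial.leadingCoeff_ne_zero.2 hne.2) hL, fun t ht => ⟨hub t ht, ?_⟩⟩
  have hut := h.fst_ne_zero ht
  have hubt := sub_ne_zero.2 (hub t ht)
  have hrelt := hrel t ht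
  rw [(IsAlgClosed.splits L).eval_eq_prod_roots, (IsAlgClosed.splits H).eval_eq_prod_roots,
    hij, hij', sub_zero] at hrelt
  rw [zpow_sub₀ hut, zpow_sub₀ hubt]
  simp only [zpow_natCast]
  field_simp
  linear_combination hrelt

theorem exists_monomial_relation (h : IsCurveParam u v θ Q N) {a a' : ℂ → ℂ}
    (ha : ContinuousOn a twicePuncturedPlane)
    (hu : ∀ t ∈ twicePuncturedPlane, u t = t * Complex.exp (a t))
    (ha' : ContinuousOn a' twicePuncturedPlane)
    (hv : ∀ t ∈ twicePuncturedPlane, v t = (t - 1) * Complex.exp (a' t)) :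
    ∃ (κ b : ℂ) (m k : ℤ) (B : Finset ℂ), κ ≠ 0 ∧ b ≠ 0 ∧ k ≠ 0 ∧
      (∀ t ∈ twicePuncturedPlane, u t ≠ b ∧ v t = κ * (u t ^ m * (u t - b) ^ k)) ∧
      ∀ w ∉ B, ∃ t ∈ twicePuncturedPlane, u t = w := by
  obtain ⟨B, -, hB⟩ := exists_finset_isGenericValue h.coeff_zero_ne_zero
  have huniq : ∀ w ∉ B, ∃! t, t ∈ twicePuncturedPlane ∧ u t = w :=
    fun w hw => h.existsUnique_preimage ha hu hB hw
  obtain ⟨ψ, hψ, hψS, huψ, hψu⟩ := h.exists_section hB huniq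
  obtain ⟨L, H, hLH, hrel⟩ := h.exists_isCoprime_mul_snd_eq hB hψ hψS huψ hψu
  obtain ⟨κ, b, m, k, hκ, hvu⟩ := h.exists_snd_eq_mul_zpow hψ hψS huψ hLH hrel
  refine ⟨κ, b, m, k, B, hκ, ?_, ?_, hvu, fun w hw => (huniq w hw).exists⟩
  · rintro rfl
    refine false_of_eq_const_mul_zpow ha hu ha' hv hκ (m := m + k) fun t ht => ?_
    rw [(hvu t ht).2, sub_zero, zpow_add₀ (h.fst_ne_zero ht)]
  · rintro rfl
    refine false_of_eq_const_mul_zpow ha hu ha' hv hκ (m := m) fun t ht => ?_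
    rw [(hvu t ht).2, zpow_zero, mul_one]

end IsCurveParam

/-! ### Monomial maps -/

theorem zpow_mul_zpow_mul_exp_zpow {p q : ℂ} (hp : p ≠ 0) (hq : q ≠ 0) (m n r s i j : ℤ)
    (f g : ℂ) :
    (p ^ m * q ^ n * Complex.exp f) ^ i * (p ^ r * q ^ s * Complex.exp g) ^ j =
      p ^ (i * m + j * r) * q ^ (i * n + j * s) * Complex.exp (i * f + j * g) := by
  rw [zpow_add₀ hp, zpow_add₀ hq, Complex.exp_add, Complex.exp_int_mul, Complex.exp_int_mul]
  simp only [mul_zpow, zpow_mul']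
  ring

theorem pow_natAbs_eq_pow_natAbs {G : Type*} [DivisionMonoid G] {a b : G} {k : ℤ}
    (h : a ^ k = b ^ k) : a ^ k.natAbs = b ^ k.natAbs := by
  rcases Int.natAbs_eq k with hk | hk <;> rw [hk] at h
  · rwa [zpow_natCast, zpow_natCast] at h
  · rwa [zpow_neg, zpow_neg, inv_inj, zpow_natCast, zpow_natCast] at h

theorem exists_zpow_eq {k : ℤ} (hk : k ≠ 0) {z : ℂ} (hz : z ≠ 0) : ∃ w ≠ 0, w ^ k = z := by
  refine ⟨Complex.exp (Complex.log z / k), Complex.exp_ne_zero _, ?_⟩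
  rw [← Complex.exp_int_mul, mul_div_cancel₀ _ (Int.cast_ne_zero.2 hk), Complex.exp_log hz]

theorem exists_isCoprime_mul_add_mul_eq_zero {R : Type*} [CommRing R] [IsDomain R]
    [IsPrincipalIdealRing R] {m n r s : R} (h : m * s - n * r = 0) :
    ∃ i j : R, IsCoprime i j ∧ i * m + j * r = 0 ∧ i * n + j * s = 0 := by
  classical
  let := UniqueFactorizationMonoid.toGCDMonoid R
  obtain ⟨v, hv, hker⟩ := Matrix.exists_vecMul_eq_zero_iff.2
    ((Matrix.det_fin_two_of m n r s).trans h)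
  obtain ⟨i, j, hi, hj, hunit⟩ := extract_gcd (v 0) (v 1)
  set d := gcd (v 0) (v 1)
  have hd : d ≠ 0 := fun hd =>
    hv (funext (Fin.forall_fin_two.2 ⟨by simp [hi, hd], by simp [hj, hd]⟩))
  have h₁ := congrFun hker 0
  have h₂ := congrFun hker 1
  simp only [Matrix.vecMul, dotProduct, Fin.sum_univ_two, Matrix.of_apply, Matrix.cons_val',
    Matrix.cons_val_zero, Matrix.cons_val_one, Matrix.cons_val_fin_one, Pi.zero_apply, hi, hj]
    at h₁ h₂
  exact ⟨i, j, (gcd_isUnit_iff i j).1 hunit, mul_left_cancel₀ hd (by linear_combination h₁),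
    mul_left_cancel₀ hd (by linear_combination h₂)⟩

/-- The algebraic torus of rank two, inside the affine plane. -/
def torus (K : Type*) [Field K] : Set (K × K) := {z | z.1 ≠ 0 ∧ z.2 ≠ 0}

/-- The endomorphism of the torus with exponent matrix `!![m, n; r, s]`; its values outside
`torus K` are junk. -/
def monomialMap {K : Type*} [Field K] (m n r s : ℤ) (z : K × K) : K × K :=
  (z.1 ^ m * z.2 ^ n, z.1 ^ r * z.2 ^ s)

section monomialMap

variable {K : Type*} [Field K] {m n r s : ℤ}

theorem mapsTo_monomialMap (m n r s : ℤ) : MapsTo (monomialMap m n r s) (torus K) (torus K) :=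
  fun _ hz => ⟨mul_ne_zero (zpow_ne_zero m hz.1) (zpow_ne_zero n hz.2),
    mul_ne_zero (zpow_ne_zero r hz.1) (zpow_ne_zero s hz.2)⟩

theorem monomialMap_monomialMap (m n r s m' n' r' s' : ℤ) {z : K × K} (hz : z ∈ torus K) :
    monomialMap m n r s (monomialMap m' n' r' s' z) =
      monomialMap (m * m' + n * r') (m * n' + n * s') (r * m' + s * r') (r * n' + s * s') z := by
  simp only [monomialMap, mul_zpow, zpow_add₀ hz.1, zpow_add₀ hz.2, zpow_mul', Prod.mk.injEq]
  exact ⟨mul_mul_mul_comm _ _ _ _, mul_mul_mul_comm _ _ _ _⟩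

theorem zpow_det_eq_of_monomialMap_eq {z w : K × K} (hz : z ∈ torus K) (hw : w ∈ torus K)
    (h : monomialMap m n r s z = monomialMap m n r s w) :
    z.1 ^ (m * s - n * r) = w.1 ^ (m * s - n * r) ∧
      z.2 ^ (m * s - n * r) = w.2 ^ (m * s - n * r) := by
  have hadj : ∀ q ∈ torus K, monomialMap s (-n) (-r) m (monomialMap m n r s q) =
      (q.1 ^ (m * s - n * r), q.2 ^ (m * s - n * r)) := fun q hq => by
    rw [monomialMap_monomialMap _ _ _ _ _ _ _ _ hq, monomialMap,
      show s * m + -n * r = m * s - n * r by ring, show s * n + -n * s = 0 by ring,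
      show -r * m + m * r = 0 by ring, show -r * n + m * s = m * s - n * r by ring]
    simp
  have heq := congrArg (monomialMap s (-n) (-r) m) h
  rw [hadj z hz, hadj w hw] at heq
  exact Prod.ext_iff.1 heq

theorem continuousOn_monomialMap (m n r s : ℤ) :
    ContinuousOn (monomialMap m n r s) (torus ℂ) := by
  have hcont : ∀ i j : ℤ, ContinuousOn (fun z : ℂ × ℂ => z.1 ^ i * z.2 ^ j) (torus ℂ) :=
    fun i j => (continuousOn_fst.zpow₀ i fun z hz => Or.inl hz.1).mul
      (continuousOn_snd.zpow₀ j fun z hz => Or.inl hz.2)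
  exact (hcont m n).prodMk (hcont r s)

theorem monomialMap_mul_exp (hD : m * s - n * r ≠ 0) (p q f g : ℂ) :
    monomialMap m n r s (p * Complex.exp ((s * f - n * g) / (m * s - n * r : ℤ)),
        q * Complex.exp ((m * g - r * f) / (m * s - n * r : ℤ))) =
      (p ^ m * q ^ n * Complex.exp f, p ^ r * q ^ s * Complex.exp g) := by
  have hD' : ((m * s - n * r : ℤ) : ℂ) ≠ 0 := mod_cast hD
  simp only [monomialMap, mul_zpow, ← Complex.exp_int_mul, mul_mul_mul_comm, ← Complex.exp_add,
    ← mul_div_assoc, ← add_div]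
  congr <;> rw [div_eq_iff hD'] <;> push_cast <;> ring

theorem monomialMap_mul_zpow_mul_zpow {w : K} (hw : w ≠ 0) (m n r s e k : ℤ) (z μ : K) :
    monomialMap m n r s (w, μ ^ k * (w ^ e * z ^ k)) =
      monomialMap (m + e * n) (k * n) (r + e * s) (k * s) (w, μ * z) := by
  simp only [monomialMap, zpow_add₀ hw, zpow_mul, mul_zpow, Prod.mk.injEq]
  exact ⟨by ring, by ring⟩

end monomialMap

/-- The zeros of the Laurent polynomial with coefficients `c` in the torus. -/
def laurentZeros (c : (ℤ × ℤ) →₀ ℂ) : Set (ℂ × ℂ) :=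
  {z | z.1 ≠ 0 ∧ z.2 ≠ 0 ∧ laurentEval c z.1 z.2 = 0}

theorem continuousOn_laurentEval (c : (ℤ × ℤ) →₀ ℂ) :
    ContinuousOn (fun z : ℂ × ℂ => laurentEval c z.1 z.2) (torus ℂ) :=
  continuousOn_finsetSum _ fun j _ =>
    (continuousOn_const.mul (continuousOn_fst.zpow₀ j.1 fun _ hz => Or.inl hz.1)).mul
      (continuousOn_snd.zpow₀ j.2 fun _ hz => Or.inl hz.2)

theorem mapsTo_laurentZeros_of_mapsTo_diff_finite {α : Type*} [TopologicalSpace α] [T1Space α]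
    [∀ x : α, (𝓝[≠] x).NeBot] {c : (ℤ × ℤ) →₀ ℂ} {U T : Set α} (hU : IsOpen U) (hT : T.Finite)
    {f : α → ℂ × ℂ} (hf : ContinuousOn f U) (hfU : MapsTo f U (torus ℂ))
    (h : MapsTo f (U \ T) (laurentZeros c)) : MapsTo f U (laurentZeros c) := by
  have heval : EqOn (fun x => laurentEval c (f x).1 (f x).2) 0 U :=
    eqOn_of_eqOn_diff_finite hU hT ((continuousOn_laurentEval c).comp hf hfU)
      continuousOn_const fun x hx => (h hx).2.2
  exact fun x hx => ⟨(hfU hx).1, (hfU hx).2, heval hx⟩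

theorem exists_torusZeros_eq_preimage {c : (ℤ × ℤ) →₀ ℂ} (hc : c ≠ 0) {m n r s : ℤ}
    (hD : m * s - n * r ≠ 0) :
    ∃ Q : ℂ[X][Y], Q.coeff 0 ≠ 0 ∧
      torusZeros Q = torus ℂ ∩ monomialMap m n r s ⁻¹' laurentZeros c := by
  obtain ⟨c', hc', heval⟩ := exists_laurentEval_comp_eq hc hD
  obtain ⟨Q, a, b, hQ, hQeval⟩ := exists_evalEval_eq_zpow_mul_laurentEval hc'
  refine ⟨Q, hQ, Set.ext fun z => ⟨fun ⟨h₁, h₂, h₀⟩ => ⟨⟨h₁, h₂⟩, ?_⟩, fun ⟨⟨h₁, h₂⟩, h₀⟩ =>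
    ⟨h₁, h₂, by rw [hQeval _ _ h₁ h₂, heval _ _ h₁ h₂]; exact mul_eq_zero_of_right _ h₀.2.2⟩⟩⟩
  have hmem := mapsTo_monomialMap m n r s (show z ∈ torus ℂ from ⟨h₁, h₂⟩)
  rw [hQeval _ _ h₁ h₂, heval _ _ h₁ h₂] at h₀
  exact ⟨hmem.1, hmem.2, (mul_eq_zero.1 h₀).resolve_left
    (mul_ne_zero (zpow_ne_zero _ h₁) (zpow_ne_zero _ h₂))⟩

/-- `φ` restricts to a homeomorphism from the twice punctured plane onto `V`, with inverse `τ`.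
Both maps are total functions, so that composites need no subtypes. -/
structure IsHomeoParam (φ : ℂ → ℂ × ℂ) (τ : ℂ × ℂ → ℂ) (V : Set (ℂ × ℂ)) : Prop where
  continuousOn : ContinuousOn φ twicePuncturedPlane
  mapsTo : MapsTo φ twicePuncturedPlane V
  continuousOn_inv : ContinuousOn τ V
  mapsTo_inv : MapsTo τ V twicePuncturedPlane
  leftInvOn : LeftInvOn τ φ twicePuncturedPlane
  rightInvOn : RightInvOn τ φ V

theorem continuousOn_extend_val {α β : Type*} [TopologicalSpace α] [TopologicalSpace β]
    {s : Set α} {f : s → β} (hf : Continuous f) (g : α → β) :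
    ContinuousOn (Function.extend Subtype.val f g) s := by
  rw [continuousOn_iff_continuous_domRestrict]
  exact hf.congr fun x => (Subtype.val_injective.extend_apply f g x).symm

theorem exists_isHomeoParam {V : Set (ℂ × ℂ)} (e : V ≃ₜ twicePuncturedPlane) :
    ∃ φ τ, IsHomeoParam φ τ V := by
  let φ : ℂ → ℂ × ℂ := Function.extend Subtype.val (fun t => (e.symm t : ℂ × ℂ)) 0
  let τ : ℂ × ℂ → ℂ := Function.extend Subtype.val (fun z => (e z : ℂ)) 0
  have hφ : ∀ t : twicePuncturedPlane, φ t = e.symm t := Subtype.val_injective.extend_apply _ _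
  have hτ : ∀ z : V, τ z = e z := Subtype.val_injective.extend_apply _ _
  refine ⟨φ, τ, continuousOn_extend_val (continuous_subtype_val.comp e.symm.continuous) 0,
    fun t ht => ?_, continuousOn_extend_val (continuous_subtype_val.comp e.continuous) 0,
    fun z hz => ?_, fun t ht => ?_, fun z hz => ?_⟩
  · exact hφ ⟨t, ht⟩ ▸ (e.symm ⟨t, ht⟩).2
  · exact hτ ⟨z, hz⟩ ▸ (e ⟨z, hz⟩).2
  · rw [hφ ⟨t, ht⟩, hτ, e.apply_symm_apply]
  · rw [hτ ⟨z, hz⟩, hφ, e.symm_apply_apply]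

namespace IsHomeoParam

variable {φ : ℂ → ℂ × ℂ} {τ : ℂ × ℂ → ℂ} {c : (ℤ × ℤ) →₀ ℂ} {m n r s : ℤ} {u v : ℂ → ℂ}

theorem mapsTo_torus (h : IsHomeoParam φ τ (laurentZeros c)) :
    MapsTo φ twicePuncturedPlane (torus ℂ) :=
  h.mapsTo.mono_right fun _ hz => ⟨hz.1, hz.2.1⟩

theorem exists_isCurveParam (h : IsHomeoParam φ τ (laurentZeros c)) (hc : c ≠ 0)
    (hD : m * s - n * r ≠ 0) (hu : ContinuousOn u twicePuncturedPlane)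
    (hv : ContinuousOn v twicePuncturedPlane)
    (huv : MapsTo (fun t => (u t, v t)) twicePuncturedPlane (torus ℂ))
    (hφ : ∀ t ∈ twicePuncturedPlane, monomialMap m n r s (u t, v t) = φ t) :
    ∃ Q, IsCurveParam u v (τ ∘ monomialMap m n r s) Q (m * s - n * r).natAbs := by
  obtain ⟨Q, hQ, hzeros⟩ := exists_torusZeros_eq_preimage hc hD
  have hmem : ∀ q ∈ torusZeros Q, q ∈ torus ℂ ∧ monomialMap m n r s q ∈ laurentZeros c :=
    fun q hq => hzeros.subset hq
  have hmaps : MapsTo (τ ∘ monomialMap m n r s) (torusZeros Q) twicePuncturedPlane :=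
    fun q hq => h.mapsTo_inv (hmem q hq).2
  have hpow : ∀ q ∈ torusZeros Q, u ((τ ∘ monomialMap m n r s) q) ^ (m * s - n * r) =
      q.1 ^ (m * s - n * r) := fun q hq =>
    (zpow_det_eq_of_monomialMap_eq (huv (hmaps hq)) (hmem q hq).1
      ((hφ _ (hmaps hq)).trans (h.rightInvOn (hmem q hq).2))).1
  refine ⟨Q, hu, hv, fun t ht => hzeros.symm.subset ⟨huv ht, ?_⟩,
    h.continuousOn_inv.comp ((continuousOn_monomialMap m n r s).mono fun q hq => (hmem q hq).1)
      fun q hq => (hmem q hq).2, hmaps, fun t ht => ?_,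
    fun q hq => pow_natAbs_eq_pow_natAbs (hpow q hq), Int.natAbs_ne_zero.2 hD, hQ⟩
  · exact mem_preimage.2 (hφ t ht ▸ h.mapsTo ht)
  · rw [Function.comp_apply, hφ t ht]
    exact h.leftInvOn ht

theorem exists_isCurveParam_of_isCoprime (h : IsHomeoParam φ τ (laurentZeros c)) (hc : c ≠ 0)
    {i j : ℤ} (hij : IsCoprime i j) :
    ∃ v θ Q N, IsCurveParam (fun t => (φ t).1 ^ i * (φ t).2 ^ j) v θ Q N := by
  obtain ⟨a, b, hab⟩ := hij
  have hψ : ContinuousOn (fun t => monomialMap i j (-b) a (φ t)) twicePuncturedPlane :=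
    (continuousOn_monomialMap i j (-b) a).comp h.continuousOn h.mapsTo_torus
  obtain ⟨Q, hQ⟩ := h.exists_isCurveParam hc (m := a) (n := -j) (r := b) (s := i)
    (by rw [show a * i - -j * b = a * i + b * j by ring, hab]; exact one_ne_zero) hψ.fst hψ.snd
    (fun t ht => mapsTo_monomialMap i j (-b) a (h.mapsTo_torus ht)) fun t ht => by
      rw [Prod.mk.eta, monomialMap_monomialMap _ _ _ _ _ _ _ _ (h.mapsTo_torus ht), monomialMap,
        show a * i + -j * -b = 1 by linear_combination hab, show a * j + -j * a = 0 by ring,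
        show b * i + i * -b = 0 by ring, show b * j + i * a = 1 by linear_combination hab]
      simp
  exact ⟨_, _, Q, _, hQ⟩

theorem det_ne_zero (h : IsHomeoParam φ τ (laurentZeros c)) (hc : c ≠ 0) {f g : ℂ → ℂ}
    (hf : ContinuousOn f twicePuncturedPlane) (hg : ContinuousOn g twicePuncturedPlane)
    (hx : ∀ t ∈ twicePuncturedPlane, (φ t).1 = t ^ m * (t - 1) ^ n * Complex.exp (f t))
    (hy : ∀ t ∈ twicePuncturedPlane, (φ t).2 = t ^ r * (t - 1) ^ s * Complex.exp (g t)) :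
    m * s - n * r ≠ 0 := by
  intro hD
  obtain ⟨i, j, hij, hmr, hns⟩ := exists_isCoprime_mul_add_mul_eq_zero hD
  obtain ⟨v, θ, Q, N, hQ⟩ := h.exists_isCurveParam_of_isCoprime hc hij
  refine hQ.false_of_fst_eq_exp (a := fun t => i * f t + j * g t)
    ((continuousOn_const.mul hf).add (continuousOn_const.mul hg)) fun t ht => ?_
  rw [hx t ht, hy t ht, zpow_mul_zpow_mul_exp_zpow ht.1 (sub_ne_zero.2 ht.2), hmr, hns, zpow_zero,
    zpow_zero, one_mul, one_mul]

theorem exists_monomialMap_mul_exp_eq (h : IsHomeoParam φ τ (laurentZeros c)) (hc : c ≠ 0) :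
    ∃ (m n r s : ℤ) (a a' : ℂ → ℂ), m * s - n * r ≠ 0 ∧ ContinuousOn a twicePuncturedPlane ∧
      ContinuousOn a' twicePuncturedPlane ∧ ∀ t ∈ twicePuncturedPlane,
        monomialMap m n r s (t * Complex.exp (a t), (t - 1) * Complex.exp (a' t)) = φ t := by
  obtain ⟨m, n, f, hf, hx⟩ := exists_zpow_mul_zpow_mul_exp h.continuousOn.fst
    fun t ht => (h.mapsTo_torus ht).1
  obtain ⟨r, s, g, hg, hy⟩ := exists_zpow_mul_zpow_mul_exp h.continuousOn.snd
    fun t ht => (h.mapsTo_torus ht).2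
  have hD := h.det_ne_zero hc hf hg hx hy
  exact ⟨m, n, r, s, _, _, hD,
    ((continuousOn_const.mul hf).sub (continuousOn_const.mul hg)).div_const _,
    ((continuousOn_const.mul hg).sub (continuousOn_const.mul hf)).div_const _,
    fun t ht => (monomialMap_mul_exp hD t (t - 1) (f t) (g t)).trans
      (Prod.ext (hx t ht).symm (hy t ht).symm)⟩

theorem exists_eq_monomialMap (h : IsHomeoParam φ τ (laurentZeros c)) (hc : c ≠ 0) :
    ∃ (u : ℂ → ℂ) (μ b : ℂ) (α β γ δ : ℤ) (B : Finset ℂ), μ ≠ 0 ∧ b ≠ 0 ∧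
      (∀ t ∈ twicePuncturedPlane, u t ≠ 0 ∧ u t ≠ b ∧
        φ t = monomialMap α β γ δ (u t, μ * (u t - b))) ∧
      ∀ w ∉ B, ∃ t ∈ twicePuncturedPlane, u t = w := by
  obtain ⟨m, n, r, s, a, a', hD, ha, ha', hφ⟩ := h.exists_monomialMap_mul_exp_eq hc
  obtain ⟨Q, hQ⟩ := h.exists_isCurveParam hc hD (continuousOn_id.mul ha.cexp)
    ((continuousOn_id.sub continuousOn_const).mul ha'.cexp) (fun t ht =>
      ⟨mul_ne_zero ht.1 (Complex.exp_ne_zero _),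
        mul_ne_zero (sub_ne_zero.2 ht.2) (Complex.exp_ne_zero _)⟩) hφ
  obtain ⟨κ, b, e, k, B, hκ, hb, hk, huv, hB⟩ :=
    hQ.exists_monomial_relation ha (fun _ _ => rfl) ha' (fun _ _ => rfl)
  obtain ⟨μ, hμ, rfl⟩ := exists_zpow_eq hk hκ
  refine ⟨_, μ, b, m + e * n, k * n, r + e * s, k * s, B, hμ, hb,
    fun t ht => ⟨hQ.fst_ne_zero ht, (huv t ht).1, ?_⟩, hB⟩
  rw [← monomialMap_mul_zpow_mul_zpow (hQ.fst_ne_zero ht), ← (huv t ht).2]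
  exact (hφ t ht).symm

end IsHomeoParam

theorem mapsTo_monomialMap_laurentZeros_of_notMem {c : (ℤ × ℤ) →₀ ℂ} {α β γ δ : ℤ} {μ b : ℂ}
    (B : Finset ℂ) (h : ∀ w ∉ B, monomialMap α β γ δ (w, μ * (w - b)) ∈ laurentZeros c) :
    MapsTo (fun w => monomialMap α β γ δ (w, μ * (w - b))) {w | w ≠ 0 ∧ μ * (w - b) ≠ 0}
      (laurentZeros c) := by
  have hU : IsOpen {w : ℂ | w ≠ 0 ∧ μ * (w - b) ≠ 0} :=
    (isOpen_ne_fun continuous_id continuous_const).inter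
      (isOpen_ne_fun (by fun_prop) continuous_const)
  have hline : MapsTo (fun w => (w, μ * (w - b))) {w : ℂ | w ≠ 0 ∧ μ * (w - b) ≠ 0} (torus ℂ) :=
    fun w hw => hw
  exact mapsTo_laurentZeros_of_mapsTo_diff_finite hU B.finite_toSet
    ((continuousOn_monomialMap α β γ δ).comp (by fun_prop) hline)
    ((mapsTo_monomialMap α β γ δ).comp hline) fun w hw => h w hw.2

/-- Let `V ⊆ (ℂ*)²` be an algebraic curve homeomorphic to a sphere with
3 punctures.  Then there exists a multiplicative group endomorphism
`M : (ℂ*)² → (ℂ*)²` (a monomial map `(z₁,z₂) ↦ (z₁^α z₂^β, z₁^γ z₂^δ)`) and a line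
`ℂΛ = {(z₁,z₂) ∈ (ℂ*)² | b₁z₁ + b₂z₂ + b₀ = 0}` with `b₀, b₁, b₂ ∈ ℂ*` such that
`V = M(ℂΛ)`. -/
theorem thrice_punctured_curve_is_monomial_image_of_line
    (c : (ℤ × ℤ) →₀ ℂ) (hc : c ≠ 0)
    (V : Set (ℂ × ℂ))
    -- `V` is an algebraic curve in `(ℂ*)²`, cut out by a Laurent polynomial
    (hV : V = {z : ℂ × ℂ | z.1 ≠ 0 ∧ z.2 ≠ 0 ∧
      (∑ j ∈ c.support, c j * z.1 ^ j.1 * z.2 ^ j.2) = 0})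
    -- `V` is homeomorphic to a sphere punctured 3 times
    (hhomeo : Nonempty (V ≃ₜ {w : ℂ | w ≠ 0 ∧ w ≠ 1})) :
    ∃ (α β γ δ : ℤ) (b₀ b₁ b₂ : ℂ), b₀ ≠ 0 ∧ b₁ ≠ 0 ∧ b₂ ≠ 0 ∧
      V = (fun z : ℂ × ℂ => (z.1 ^ α * z.2 ^ β, z.1 ^ γ * z.2 ^ δ)) ''
        {z : ℂ × ℂ | z.1 ≠ 0 ∧ z.2 ≠ 0 ∧ b₁ * z.1 + b₂ * z.2 + b₀ = 0} := by
  change V = laurentZeros c at hV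
  subst hV
  obtain ⟨e⟩ := hhomeo
  obtain ⟨φ, τ, h⟩ := exists_isHomeoParam e
  obtain ⟨u, μ, b, α, β, γ, δ, B, hμ, hb, hφ, hB⟩ := h.exists_eq_monomialMap hc
  refine ⟨α, β, γ, δ, μ * b, -μ, 1, mul_ne_zero hμ hb, neg_ne_zero.2 hμ, one_ne_zero, ?_⟩
  apply Subset.antisymm
  · intro z hz
    obtain ⟨hu0, hub, hφz⟩ := hφ _ (h.mapsTo_inv hz)
    exact ⟨(u (τ z), μ * (u (τ z) - b)), ⟨hu0, mul_ne_zero hμ (sub_ne_zero.2 hub), by ring⟩,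
      hφz.symm.trans (h.rightInvOn hz)⟩
  · rintro _ ⟨⟨w, z⟩, ⟨hw, hz, hline⟩, rfl⟩
    obtain rfl : z = μ * (w - b) := by linear_combination hline
    refine mapsTo_monomialMap_laurentZeros_of_notMem B (fun x hx => ?_) ⟨hw, hz⟩
    obtain ⟨t, ht, rfl⟩ := hB x hx
    exact (hφ t ht).2.2 ▸ h.mapsTo ht
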